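/- Let 1 < p < ∞ and let ω and ν be radial weights. Then the following statements are equivalent: (i) there exists C > 0 such that ‖H_ω(f) + H*_ω(f)‖_{L^p_ν} ≤ C ‖f‖_{L^p_ν} for every nonnegative f ∈ L^p_ν; (ii) there exists C > 0 such that ‖S_{ω₁,rad}(f)‖_{L^p_ν} ≤ C ‖f‖_{L^p_ν} for every nonnegative f ∈ L^p_ν; (iii) there exists C > 0 such that ‖M_{ω₁,rad}(f)‖_{L^p_ν} ≤ C ‖f‖_{L^p_ν} for every f ∈ L^p_ν; (iv) A_p(ω,ν) < ∞. -/

import Mathlib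

open MeasureTheory Set Metric
open scoped ENNReal NNReal

noncomputable section

/-- `ω̂(r) = ∫_r^1 ω(s) ds`. -/
def hatw (w : ℝ → ℝ) (r : ℝ) : ℝ := ∫ s in Set.Ioo r 1, w s

/-- `ω̂₁(r) = ∫_r^1 s ω(s) ds`. -/
def hat1 (w : ℝ → ℝ) (r : ℝ) : ℝ := ∫ s in Set.Ioo r 1, s * w s

/-- A radial weight: nonnegative, integrable on `[0,1)`, with `ω̂(r) > 0` for `0 ≤ r < 1`. -/
def IsRadialWeight (w : ℝ → ℝ) : Prop :=
  (∀ r ∈ Set.Ico (0:ℝ) 1, 0 ≤ w r) ∧ MeasureTheory.IntegrableOn w (Set.Ico (0:ℝ) 1) ∧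
    ∀ r ∈ Set.Ico (0:ℝ) 1, 0 < hatw w r

/-- The `L^p_ν` norm (with `dA` = area measure divided by `π`) of a real-valued function on
the unit disc. -/
def LpR (p : ℝ) (v : ℝ → ℝ) (f : ℂ → ℝ) : ℝ≥0∞ :=
  ((∫⁻ z in Metric.ball (0:ℂ) 1, ENNReal.ofReal (|f z| ^ p * v ‖z‖)) /
    ENNReal.ofReal Real.pi) ^ (1 / p)

/-- The `L^p_ν` norm of an `ℝ≥0∞`-valued function on the unit disc. -/
def LpE (p : ℝ) (v : ℝ → ℝ) (g : ℂ → ℝ≥0∞) : ℝ≥0∞ :=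
  ((∫⁻ z in Metric.ball (0:ℂ) 1, g z ^ p * ENNReal.ofReal (v ‖z‖)) /
    ENNReal.ofReal Real.pi) ^ (1 / p)

/-- The averaging operator `H_ω(f)(z) = (1/ω̂₁(|z|)) ∫_{|z|}^1 f(s z/|z|) s ω(s) ds`. -/
def HE (w : ℝ → ℝ) (f : ℂ → ℝ) (z : ℂ) : ℝ≥0∞ :=
  (∫⁻ s in Set.Ioo ‖z‖ 1, ENNReal.ofReal (f ((s / ‖z‖) • z) * (s * w s))) /
    ENNReal.ofReal (hat1 w ‖z‖)

/-- The adjoint `H*_ω(f)(z) = ∫_0^{|z|} f(s z/|z|) s ω(s)/ω̂₁(s) ds`. -/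
def HstarE (w : ℝ → ℝ) (f : ℂ → ℝ) (z : ℂ) : ℝ≥0∞ :=
  ∫⁻ s in Set.Ioo 0 ‖z‖,
    ENNReal.ofReal (f ((s / ‖z‖) • z) * (s * w s)) / ENNReal.ofReal (hat1 w s)

/-- The Stieltjes-type operator
`S_{ω₁,rad}(f)(z) = ∫_0^1 f(s z/|z|) s ω(s)/(ω̂₁(s)+ω̂₁(|z|)) ds`. -/
def SE (w : ℝ → ℝ) (f : ℂ → ℝ) (z : ℂ) : ℝ≥0∞ :=
  ∫⁻ s in Set.Ioo (0:ℝ) 1,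
    ENNReal.ofReal (f ((s / ‖z‖) • z) * (s * w s)) /
      ENNReal.ofReal (hat1 w s + hat1 w ‖z‖)

/-- The Hörmander-type maximal function
`M_{ω₁,rad}(f)(z) = sup_{0 ≤ b < |z|} (1/ω̂₁(b)) ∫_b^1 |f(s z/|z|)| s ω(s) ds`. -/
def MradE (w : ℝ → ℝ) (f : ℂ → ℝ) (z : ℂ) : ℝ≥0∞ :=
  ⨆ b ∈ Set.Ico (0:ℝ) ‖z‖,
    (∫⁻ s in Set.Ioo b 1, ENNReal.ofReal (|f ((s / ‖z‖) • z)| * (s * w s))) /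
      ENNReal.ofReal (hat1 w b)

/-- `σ(s) = (ω(s)/ν(s)^{1/p})^{p'}`, as an extended nonnegative real (so `σ(s) = ∞`
when `ν(s) = 0 < ω(s)`). -/
def sigmaE (p : ℝ) (w v : ℝ → ℝ) (s : ℝ) : ℝ≥0∞ :=
  (ENNReal.ofReal (w s) / ENNReal.ofReal (v s) ^ (1 / p)) ^ (p / (p - 1))

/-- The Muckenhoupt-type quantity
`A_p(ω,ν) = sup_{0 ≤ r < 1} ν̂₁(r)^{1/p} σ̂₁(r)^{1/p'} / ω̂₁(r)` (note `1/p' = 1 - 1/p`). -/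
def ApE (p : ℝ) (w v : ℝ → ℝ) : ℝ≥0∞ :=
  ⨆ r ∈ Set.Ico (0:ℝ) 1,
    (∫⁻ s in Set.Ioo r 1, ENNReal.ofReal (s * v s)) ^ (1 / p) *
      (∫⁻ s in Set.Ioo r 1, ENNReal.ofReal s * sigmaE p w v s) ^ (1 - 1 / p) /
      ENNReal.ofReal (hat1 w r)


/-! ### Abstract one-dimensional lemmas -/

lemma absorb {Q x b : ℝ≥0∞} (hQ : Q ≠ ⊤) (hx : x < 1) (h : Q ≤ x * Q + b) : Q ≤ b / (1 - x) := by
  have h1 : (1 - x) ≠ 0 := (tsub_pos_of_lt hx).ne'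
  have h2 : (1 - x) ≠ ⊤ := ENNReal.sub_ne_top ENNReal.one_ne_top
  rw [ENNReal.le_div_iff_mul_le (Or.inl h1) (Or.inl h2), mul_comm, ENNReal.sub_mul]
  · rw [one_mul]
    exact tsub_le_iff_left.2 h
  · intros; exact hQ

lemma inv_rpow_mul_self {N : ℝ≥0∞} (h0 : N ≠ 0) (ht : N ≠ ⊤) {α β : ℝ} (h : α + β = 1) :
    (N ^ α)⁻¹ * N = N ^ β := by
  have : β = 1 - α := by linarith
  rw [this, ENNReal.rpow_sub _ _ h0 ht, ENNReal.rpow_one, mul_comm, div_eq_mul_inv]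

lemma exists_tail_eq (μ : Measure ℝ) [IsFiniteMeasure μ] [NullSingletonClass μ] {r t : ℝ}
    (hrt : r ≤ t) (ht : t ≤ 1) {x : ℝ≥0∞} (h1 : μ (Ioo t 1) ≤ x) (h2 : x ≤ μ (Ioo r 1)) :
    ∃ s ∈ Icc r t, μ (Ioo s 1) = x := by
  have hc : Continuous fun b : ℝ => ∫ _x in (1:ℝ)..b, (1:ℝ) ∂μ :=
    intervalIntegral.continuous_primitive (fun a b => by simp) 1
  have heq : ∀ s ≤ (1:ℝ), μ (Ioo s 1) = ENNReal.ofReal (-∫ _x in (1:ℝ)..s, (1:ℝ) ∂μ) := by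
    intro s hs
    rw [intervalIntegral.integral_symm, neg_neg, intervalIntegral.integral_of_le hs]
    simp only [integral_const, smul_eq_mul, mul_one, measureReal_restrict_apply_univ]
    rw [measureReal_def, ENNReal.ofReal_toReal (measure_ne_top _ _)]
    exact measure_congr Ioo_ae_eq_Ioc
  have hcont : ContinuousOn (fun s => μ (Ioo s 1)) (Icc r t) := by
    have : Continuous fun s : ℝ => ENNReal.ofReal (-∫ _x in (1:ℝ)..s, (1:ℝ) ∂μ) :=
      ENNReal.continuous_ofReal.comp hc.neg
    exact this.continuousOn.congr (fun s hs => heq s (hs.2.trans ht))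
  obtain ⟨s, hs, hsx⟩ := intermediate_value_Icc' hrt hcont ⟨h1, h2⟩
  exact ⟨s, hs, hsx⟩

lemma tail_anti (μ : Measure ℝ) : Antitone fun s : ℝ => μ (Ioo s 1) :=
  fun _ _ h => measure_mono (Ioo_subset_Ioo_left h)

lemma half_rpow_lt_one {β : ℝ} (hβ : 0 < β) : ((2:ℝ≥0∞)⁻¹) ^ β < 1 :=
  ENNReal.rpow_lt_one (by simp) hβ

lemma setLIntegral_le_const_mul (μ : Measure ℝ) {S : Set ℝ} (hS : MeasurableSet S)
    {f : ℝ → ℝ≥0∞} {c : ℝ≥0∞} (h : ∀ s ∈ S, f s ≤ c) : ∫⁻ s in S, f s ∂μ ≤ c * μ S := by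
  calc ∫⁻ s in S, f s ∂μ ≤ ∫⁻ s in S, c ∂μ := setLIntegral_mono' hS h
    _ = c * μ S := by simp

lemma tail_L1_trunc (μ : Measure ℝ) [IsFiniteMeasure μ] [NullSingletonClass μ] {α β : ℝ}
    (hα : 0 < α) (hβ : 0 < β) (hαβ : α + β = 1) (hpos : ∀ r ∈ Ico (0:ℝ) 1, 0 < μ (Ioo r 1))
    {t : ℝ} (ht1 : t < 1) :
    ∀ r ∈ Ico (0:ℝ) t, ∫⁻ s in Ioo r t, (μ (Ioo s 1) ^ α)⁻¹ ∂μ ≤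
      (2 ^ α / (1 - (2:ℝ≥0∞)⁻¹ ^ β)) * μ (Ioo r 1) ^ β := by
  set N : ℝ → ℝ≥0∞ := fun s => μ (Ioo s 1) with hN
  set G : ℝ → ℝ≥0∞ := fun r => ∫⁻ s in Ioo r t, (N s ^ α)⁻¹ ∂μ with hG
  have hanti : Antitone N := tail_anti μ
  have hNt : ∀ r, N r ≠ ⊤ := fun r => measure_ne_top _ _
  have hN0 : ∀ r ∈ Ico (0:ℝ) 1, N r ≠ 0 := fun r hr => (hpos r hr).ne'
  set Q : ℝ≥0∞ := ⨆ r ∈ Ico (0:ℝ) t, G r / N r ^ β with hQ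
  have key : ∀ r ∈ Ico (0:ℝ) t, ∀ c : ℝ≥0∞, G r / N r ^ β ≤ c ↔ G r ≤ c * N r ^ β := by
    intro r hr c
    have hr1 : r ∈ Ico (0:ℝ) 1 := ⟨hr.1, hr.2.trans ht1⟩
    rw [ENNReal.div_le_iff]
    · simp [ENNReal.rpow_eq_zero_iff, hN0 r hr1, hNt r]
    · exact ENNReal.rpow_ne_top_of_nonneg hβ.le (hNt r)
  have hpiece : ∀ r s, r ∈ Ico (0:ℝ) 1 → ∫⁻ x in Ioo r s, (N x ^ α)⁻¹ ∂μ ≤ (N s ^ α)⁻¹ * N r := by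
    intro r s hr
    rcases le_or_gt s 1 with hs | hs
    · refine (setLIntegral_le_const_mul μ measurableSet_Ioo (c := (N s ^ α)⁻¹) ?_).trans ?_
      · intro x hx
        exact ENNReal.inv_le_inv.2 (ENNReal.rpow_le_rpow (hanti hx.2.le) hα.le)
      · gcongr
        exact measure_mono (Ioo_subset_Ioo_right hs)
    · have : N s = 0 := by simp [hN, Ioo_eq_empty_of_le hs.le]
      rw [this, ENNReal.zero_rpow_of_pos hα, ENNReal.inv_zero, ENNReal.top_mul (hN0 r hr)]
      exact le_top
  have hQt : Q ≠ ⊤ := by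
    rcases le_or_gt t 0 with h0 | h0
    · simp [hQ, Ico_eq_empty_of_le h0]
    have htm : t ∈ Ico (0:ℝ) 1 := ⟨h0.le, ht1⟩
    refine ne_top_of_le_ne_top (b := (N t ^ α)⁻¹ * N 0 ^ α) ?_ ?_
    · refine ENNReal.mul_ne_top ?_ (ENNReal.rpow_ne_top_of_nonneg hα.le (hNt 0))
      simp [ENNReal.rpow_eq_zero_iff, hN0 t htm, hNt t]
    · refine iSup₂_le fun r hr => ?_
      have hr1 : r ∈ Ico (0:ℝ) 1 := ⟨hr.1, hr.2.trans ht1⟩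
      rw [key r hr]
      refine (hpiece r t hr1).trans ?_
      rw [mul_assoc]
      gcongr
      calc N r = N r ^ (α + β) := by rw [hαβ, ENNReal.rpow_one]
        _ = N r ^ α * N r ^ β := ENNReal.rpow_add _ _ (hN0 r hr1) (hNt r)
        _ ≤ N 0 ^ α * N r ^ β := by gcongr; exact hanti hr.1
  have hQle : Q ≤ (2:ℝ≥0∞)⁻¹ ^ β * Q + 2 ^ α := by
    refine iSup₂_le fun r hr => ?_
    have hr1 : r ∈ Ico (0:ℝ) 1 := ⟨hr.1, hr.2.trans ht1⟩
    rw [key r hr]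
    obtain ⟨s, hs, hsN⟩ := exists_tail_eq μ hr1.2.le le_rfl (x := N r / 2) (by simp)
      (ENNReal.half_le_self)
    change N s = N r / 2 at hsN
    have hs1 : s < 1 := by
      refine lt_of_le_of_ne hs.2 ?_
      rintro rfl
      have : N r / 2 ≠ 0 := (ENNReal.half_pos (hN0 r hr1)).ne'
      apply this
      rw [← hsN]; simp [hN]
    have hrs : r < s := by
      refine lt_of_le_of_ne hs.1 ?_
      rintro rfl
      exact (ENNReal.half_lt_self (hN0 r hr1) (hNt r)).ne hsN.symm
    have hfirst : ∫⁻ x in Ioo r s, (N x ^ α)⁻¹ ∂μ ≤ 2 ^ α * N r ^ β := by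
      refine (hpiece r s hr1).trans (le_of_eq ?_)
      rw [hsN, ENNReal.div_rpow_of_nonneg _ _ hα.le, ENNReal.inv_div, div_eq_mul_inv, mul_assoc,
        inv_rpow_mul_self (hN0 r hr1) (hNt r) hαβ]
      · simp
      · simp
    rcases le_or_gt t s with hts | hts
    · calc G r ≤ ∫⁻ x in Ioo r s, (N x ^ α)⁻¹ ∂μ := lintegral_mono_set (Ioo_subset_Ioo_right hts)
        _ ≤ 2 ^ α * N r ^ β := hfirst
        _ ≤ _ := by gcongr; exact le_add_self
    · have hGs : G s ≤ Q * N s ^ β := by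
        rw [← key s ⟨hr.1.trans hrs.le, hts⟩]
        exact le_iSup₂ (f := fun r (_ : r ∈ Ico (0:ℝ) t) => G r / N r ^ β) s
          ⟨hr.1.trans hrs.le, hts⟩
      have hsplit : G r ≤ ∫⁻ x in Ioo r s, (N x ^ α)⁻¹ ∂μ + G s := by
        calc G r ≤ ∫⁻ x in Ioc r s ∪ Ioo s t, (N x ^ α)⁻¹ ∂μ := by
              apply lintegral_mono_set
              intro x hx
              rcases le_or_gt x s with h | h
              · exact Or.inl ⟨hx.1, h⟩
              · exact Or.inr ⟨h, hx.2⟩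
          _ ≤ _ := lintegral_union_le _ _ _
          _ = _ := by
            congr 1
            exact setLIntegral_congr Ioo_ae_eq_Ioc.symm
      calc G r ≤ 2 ^ α * N r ^ β + Q * N s ^ β := hsplit.trans (add_le_add hfirst hGs)
        _ = (2⁻¹ ^ β * Q + 2 ^ α) * N r ^ β := by
          rw [hsN, div_eq_mul_inv, ENNReal.mul_rpow_of_nonneg _ _ hβ.le]; ring
  intro r hr
  rw [← key r hr]
  refine le_trans ?_ (absorb hQt (half_rpow_lt_one hβ) hQle)
  exact le_iSup₂ (f := fun r (_ : r ∈ Ico (0:ℝ) t) => G r / N r ^ β) r hr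

lemma tail_L1 (μ : Measure ℝ) [IsFiniteMeasure μ] [NullSingletonClass μ] {α β : ℝ}
    (hα : 0 < α) (hβ : 0 < β) (hαβ : α + β = 1) (hpos : ∀ r ∈ Ico (0:ℝ) 1, 0 < μ (Ioo r 1)) :
    ∃ C : ℝ≥0∞, C ≠ ⊤ ∧ ∀ r ∈ Ico (0:ℝ) 1, ∫⁻ s in Ioo r 1, (μ (Ioo s 1) ^ α)⁻¹ ∂μ ≤
      C * μ (Ioo r 1) ^ β := by
  refine ⟨2 ^ α / (1 - (2:ℝ≥0∞)⁻¹ ^ β), ?_, ?_⟩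
  · refine ENNReal.div_ne_top (ENNReal.rpow_ne_top_of_nonneg hα.le (by simp)) ?_
    exact (tsub_pos_of_lt (half_rpow_lt_one hβ)).ne'
  intro r hr
  obtain ⟨u, hu, hur, hulim⟩ := exists_seq_strictMono_tendsto' hr.2
  have hU : Ioo r 1 = ⋃ n, Ioo r (u n) := by
    ext x
    simp only [mem_Ioo, mem_iUnion]
    constructor
    · rintro ⟨h1, h2⟩
      obtain ⟨n, hn⟩ := (hulim.eventually (lt_mem_nhds h2)).exists
      exact ⟨n, h1, hn⟩
    · rintro ⟨n, h1, h2⟩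
      exact ⟨h1, h2.trans (hur n).2⟩
  rw [hU, setLIntegral_iUnion_of_directed]
  · rw [← hU]
    refine iSup_le fun n => ?_
    exact tail_L1_trunc μ hα hβ hαβ hpos (hur n).2 r ⟨hr.1, (hur n).1⟩
  · exact (monotone_nat_of_le_succ fun n =>
      Ioo_subset_Ioo_right (hu.monotone n.le_succ)).directed_le

lemma ennrpow_ne_zero_iff {x : ℝ≥0∞} {a : ℝ} (ha : 0 < a) : x ^ a ≠ 0 ↔ x ≠ 0 := by
  rw [Ne, ENNReal.rpow_eq_zero_iff_of_pos ha]

lemma decay (μ ν : Measure ℝ) [IsFiniteMeasure μ] [IsFiniteMeasure ν] {α β : ℝ}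
    (hα : 0 < α) (hβ : 0 < β) {W : ℝ → ℝ≥0∞} {A : ℝ≥0∞} (hA0 : A ≠ 0) (hAt : A ≠ ⊤)
    {r s : ℝ} (hs1 : s < 1) (hrs : r ≤ s)
    (hν0 : ν (Ioo r 1) ≠ 0)
    (hWt : W r ≠ ⊤)
    (hA : μ (Ioo r 1) ^ α * ν (Ioo r 1) ^ β ≤ A * W r)
    (hH1 : W s ≤ μ (Ioo s 1) ^ α * ν (Ioo s 1) ^ β)
    (hH2 : W r ≤ W s + μ (Ioo r s) ^ α * ν (Ioo r s) ^ β)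
    (hε : ν (Ioo s 1) ≤ ((2 * A)⁻¹) ^ (1 / β) * ν (Ioo r 1)) :
    μ (Ioo s 1) ≤ (1 - ((2 * A)⁻¹) ^ (1 / α)) * μ (Ioo r 1) := by
  have h2A0 : 2 * A ≠ 0 := mul_ne_zero (by simp) hA0
  have h2At : 2 * A ≠ ⊤ := ENNReal.mul_ne_top (by simp) hAt
  have hμt : ∀ S, μ S ≠ ⊤ := fun S => measure_ne_top _ _
  have hνt : ∀ S, ν S ≠ ⊤ := fun S => measure_ne_top _ _
  have e1 : W s ≤ W r / 2 := by
    calc W s ≤ μ (Ioo s 1) ^ α * ν (Ioo s 1) ^ β := hH1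
      _ ≤ μ (Ioo r 1) ^ α * (((2 * A)⁻¹) ^ (1 / β) * ν (Ioo r 1)) ^ β := by
        gcongr
      _ = (2 * A)⁻¹ * (μ (Ioo r 1) ^ α * ν (Ioo r 1) ^ β) := by
        rw [ENNReal.mul_rpow_of_nonneg _ _ hβ.le, ← ENNReal.rpow_mul, one_div_mul_cancel hβ.ne',
          ENNReal.rpow_one]; ring
      _ ≤ (2 * A)⁻¹ * (A * W r) := by gcongr
      _ = W r / 2 := by
        rw [ENNReal.mul_inv (by simp) (by simp), div_eq_mul_inv]
        calc 2⁻¹ * A⁻¹ * (A * W r) = (A⁻¹ * A) * (W r * 2⁻¹) := by ring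
          _ = _ := by rw [ENNReal.inv_mul_cancel hA0 hAt, one_mul]
  have e2 : W r / 2 ≤ μ (Ioo r s) ^ α * ν (Ioo r 1) ^ β := by
    have h1 : W r / 2 + W r / 2 ≤ W r / 2 + μ (Ioo r s) ^ α * ν (Ioo r 1) ^ β := by
      rw [ENNReal.add_halves]
      refine hH2.trans (add_le_add e1 ?_)
      gcongr
    exact (ENNReal.add_le_add_iff_left (ENNReal.div_ne_top hWt (by simp))).1 h1
  have hnz : ν (Ioo r 1) ^ β ≠ 0 := by simp [ENNReal.rpow_eq_zero_iff, hν0, hνt]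
  have hnt : ν (Ioo r 1) ^ β ≠ ⊤ := ENNReal.rpow_ne_top_of_nonneg hβ.le (hνt _)
  have e3 : μ (Ioo r 1) ^ α ≤ (2 * A) * μ (Ioo r s) ^ α := by
    have : μ (Ioo r 1) ^ α * ν (Ioo r 1) ^ β ≤ ((2 * A) * μ (Ioo r s) ^ α) * ν (Ioo r 1) ^ β := by
      calc _ ≤ A * W r := hA
        _ = 2 * A * (W r / 2) := by
          rw [div_eq_mul_inv]
          calc A * W r = A * W r * (2 * 2⁻¹) := by
                rw [ENNReal.mul_inv_cancel (by simp) (by simp), mul_one]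
            _ = _ := by ring
        _ ≤ 2 * A * (μ (Ioo r s) ^ α * ν (Ioo r 1) ^ β) := by gcongr
        _ = _ := by ring
    exact (ENNReal.mul_le_mul_iff_left hnz hnt).1 this
  have e4 : ((2 * A)⁻¹) ^ (1 / α) * μ (Ioo r 1) ≤ μ (Ioo r s) := by
    have h1 : (2 * A)⁻¹ * μ (Ioo r 1) ^ α ≤ μ (Ioo r s) ^ α := by
      calc (2 * A)⁻¹ * μ (Ioo r 1) ^ α ≤ (2 * A)⁻¹ * ((2 * A) * μ (Ioo r s) ^ α) := by gcongr
        _ = _ := by rw [← mul_assoc, ENNReal.inv_mul_cancel h2A0 h2At, one_mul]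
    have h2 := ENNReal.rpow_le_rpow h1 (z := 1 / α) (by positivity)
    rwa [ENNReal.mul_rpow_of_nonneg _ _ (by positivity), ← ENNReal.rpow_mul, ← ENNReal.rpow_mul,
      mul_one_div_cancel hα.ne', ENNReal.rpow_one, ENNReal.rpow_one] at h2
  have e5 : μ (Ioo s 1) + μ (Ioo r s) ≤ μ (Ioo r 1) := by
    rw [← measure_union _ measurableSet_Ioo]
    · apply measure_mono
      rintro x (hx | hx)
      · exact ⟨hrs.trans_lt hx.1, hx.2⟩
      · exact ⟨hx.1, hx.2.trans hs1⟩
    · rw [Set.disjoint_left]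
      intro x hx hx'
      exact lt_asymm hx.1 hx'.2
  rw [ENNReal.sub_mul (fun _ _ => hμt _), one_mul]
  refine le_trans ?_ (tsub_le_tsub_left e4 _)
  exact ENNReal.le_sub_of_add_le_right (hμt _) e5

/-- Bundled hypotheses for the abstract one-dimensional problem. -/
structure APData (μ ν : Measure ℝ) (α β : ℝ) (W : ℝ → ℝ≥0∞) (A : ℝ≥0∞) : Prop where
  hα : 0 < α
  hβ : 0 < β
  hαβ : α + β = 1
  hA1 : 1 ≤ A
  hAt : A ≠ ⊤
  hμ : ∀ r ∈ Ico (0:ℝ) 1, 0 < μ (Ioo r 1)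
  hν : ∀ r ∈ Ico (0:ℝ) 1, 0 < ν (Ioo r 1)
  hWa : Antitone W
  hWt : ∀ r ∈ Ico (0:ℝ) 1, W r ≠ ⊤
  hW0 : ∀ r ∈ Ico (0:ℝ) 1, W r ≠ 0
  hA : ∀ r ∈ Ico (0:ℝ) 1, μ (Ioo r 1) ^ α * ν (Ioo r 1) ^ β ≤ A * W r
  hH1 : ∀ r ∈ Ico (0:ℝ) 1, W r ≤ μ (Ioo r 1) ^ α * ν (Ioo r 1) ^ β
  hH2 : ∀ r ∈ Ico (0:ℝ) 1, ∀ s ∈ Ico (0:ℝ) 1, r ≤ s →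
    W r ≤ W s + μ (Ioo r s) ^ α * ν (Ioo r s) ^ β

lemma APData.symm {μ ν : Measure ℝ} {α β : ℝ} {W : ℝ → ℝ≥0∞} {A : ℝ≥0∞}
    (h : APData μ ν α β W A) : APData ν μ β α W A where
  hα := h.hβ
  hβ := h.hα
  hαβ := by rw [add_comm]; exact h.hαβ
  hA1 := h.hA1
  hAt := h.hAt
  hμ := h.hν
  hν := h.hμ
  hWa := h.hWa
  hWt := h.hWt
  hW0 := h.hW0
  hA := fun r hr => by rw [mul_comm]; exact h.hA r hr
  hH1 := fun r hr => by rw [mul_comm]; exact h.hH1 r hr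
  hH2 := fun r hr s hs hrs => by rw [mul_comm (ν _ ^ _)]; exact h.hH2 r hr s hs hrs

lemma tail_L2 {μ ν : Measure ℝ} [IsFiniteMeasure μ] [IsFiniteMeasure ν] [NullSingletonClass ν]
    {α β : ℝ} {W : ℝ → ℝ≥0∞} {A : ℝ≥0∞} (h : APData μ ν α β W A) :
    ∃ C : ℝ≥0∞, C ≠ ⊤ ∧ ∀ r ∈ Ioo (0:ℝ) 1,
      ∫⁻ s in Ioo 0 r, (μ (Ioo s 1) ^ α)⁻¹ * (ν (Ioo s 1))⁻¹ ∂ν ≤ C * (μ (Ioo r 1) ^ α)⁻¹ := by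
  have hA0 : A ≠ 0 := (zero_lt_one.trans_le h.hA1).ne'
  have h2A0 : 2 * A ≠ 0 := mul_ne_zero (by simp) hA0
  have h2At : 2 * A ≠ ⊤ := ENNReal.mul_ne_top (by simp) h.hAt
  have h2A1 : (2 * A)⁻¹ < 1 := by
    rw [ENNReal.inv_lt_one]
    calc (1:ℝ≥0∞) < 2 := by norm_num
      _ = 2 * 1 := by simp
      _ ≤ 2 * A := by gcongr; exact h.hA1
  set ε : ℝ≥0∞ := ((2 * A)⁻¹) ^ (1 / β) with hε
  set κ : ℝ≥0∞ := ((2 * A)⁻¹) ^ (1 / α) with hκ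
  have hα := h.hα
  have hβ := h.hβ
  have hε0 : ε ≠ 0 := by
    rw [hε, ennrpow_ne_zero_iff (by positivity)]
    exact ENNReal.inv_ne_zero.2 h2At
  have hεt : ε ≠ ⊤ := ENNReal.rpow_ne_top_of_nonneg (by positivity) (ENNReal.inv_ne_top.2 h2A0)
  have hε1 : ε < 1 := ENNReal.rpow_lt_one h2A1 (by positivity)
  have hκ0 : κ ≠ 0 := by
    rw [hκ, ennrpow_ne_zero_iff (by positivity)]
    exact ENNReal.inv_ne_zero.2 h2At
  set x : ℝ≥0∞ := (1 - κ) ^ α with hx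
  have hx1 : x < 1 :=
    ENNReal.rpow_lt_one (ENNReal.sub_lt_self (by simp) (by simp) hκ0) hα
  set M : ℝ → ℝ≥0∞ := fun s => μ (Ioo s 1) with hM
  set N : ℝ → ℝ≥0∞ := fun s => ν (Ioo s 1) with hN
  have hMa : Antitone M := tail_anti μ
  have hNa : Antitone N := tail_anti ν
  have hMt : ∀ r, M r ≠ ⊤ := fun r => measure_ne_top _ _
  have hNt : ∀ r, N r ≠ ⊤ := fun r => measure_ne_top _ _
  have hM0 : ∀ r ∈ Ico (0:ℝ) 1, M r ≠ 0 := fun r hr => (h.hμ r hr).ne'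
  have hN0 : ∀ r ∈ Ico (0:ℝ) 1, N r ≠ 0 := fun r hr => (h.hν r hr).ne'
  have hMαt : ∀ r, M r ^ α ≠ ⊤ := fun r => ENNReal.rpow_ne_top_of_nonneg hα.le (hMt r)
  have hMα0 : ∀ r ∈ Ico (0:ℝ) 1, M r ^ α ≠ 0 := fun r hr => by
    rw [ennrpow_ne_zero_iff hα]; exact hM0 r hr
  set F : ℝ → ℝ≥0∞ := fun r => ∫⁻ s in Ioo 0 r, (M s ^ α)⁻¹ * (N s)⁻¹ ∂ν with hF
  refine ⟨ε⁻¹ / (1 - x), ENNReal.div_ne_top (ENNReal.inv_ne_top.2 hε0) (tsub_pos_of_lt hx1).ne', ?_⟩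
  intro r0 hr0
  set Q : ℝ≥0∞ := ⨆ r ∈ Ioc (0:ℝ) r0, F r * M r ^ α with hQ
  have key : ∀ r ∈ Ioc (0:ℝ) r0, ∀ c : ℝ≥0∞, F r * M r ^ α ≤ c ↔ F r ≤ c * (M r ^ α)⁻¹ := by
    intro r hr c
    rw [← div_eq_mul_inv, ENNReal.le_div_iff_mul_le (Or.inl (hMα0 r ⟨hr.1.le, hr.2.trans_lt hr0.2⟩))
      (Or.inl (hMαt r))]
  have hpiece : ∀ a s, 0 ≤ a → s < 1 → ∫⁻ y in Ioo a s, (M y ^ α)⁻¹ * (N y)⁻¹ ∂ν ≤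
      (M s ^ α)⁻¹ * (N s)⁻¹ * N a := by
    intro a s ha hs
    refine (setLIntegral_le_const_mul ν measurableSet_Ioo (c := (M s ^ α)⁻¹ * (N s)⁻¹) ?_).trans ?_
    · intro y hy
      gcongr
      · exact hMa hy.2.le
      · exact hNa hy.2.le
    · gcongr
      exact measure_mono (Ioo_subset_Ioo_right hs.le)
  have hQt : Q ≠ ⊤ := by
    have hr0' : r0 ∈ Ico (0:ℝ) 1 := ⟨hr0.1.le, hr0.2⟩
    refine ne_top_of_le_ne_top (b := (M r0 ^ α)⁻¹ * (N r0)⁻¹ * N 0 * M 0 ^ α) ?_ ?_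
    · refine ENNReal.mul_ne_top (ENNReal.mul_ne_top (ENNReal.mul_ne_top ?_ ?_) (hNt 0)) (hMαt 0)
      · exact ENNReal.inv_ne_top.2 (hMα0 r0 hr0')
      · exact ENNReal.inv_ne_top.2 (hN0 r0 hr0')
    · refine iSup₂_le fun r hr => ?_
      gcongr
      · calc F r ≤ F r0 := lintegral_mono_set (Ioo_subset_Ioo_right hr.2)
          _ ≤ _ := hpiece 0 r0 le_rfl hr0.2
      · exact hMa hr.1.le
  have hQle : Q ≤ x * Q + ε⁻¹ := by
    refine iSup₂_le fun s hs => ?_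
    have hs1 : s ∈ Ico (0:ℝ) 1 := ⟨hs.1.le, hs.2.trans_lt hr0.2⟩
    rw [key s hs]
    rcases le_or_gt (N 0) (N s / ε) with hc | hc
    · refine (hpiece 0 s le_rfl hs1.2).trans ?_
      calc (M s ^ α)⁻¹ * (N s)⁻¹ * N 0 ≤ (M s ^ α)⁻¹ * (N s)⁻¹ * (N s / ε) := by gcongr
        _ = ((N s)⁻¹ * N s) * ε⁻¹ * (M s ^ α)⁻¹ := by rw [div_eq_mul_inv]; ring
        _ = ε⁻¹ * (M s ^ α)⁻¹ := by rw [ENNReal.inv_mul_cancel (hN0 s hs1) (hNt s), one_mul]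
        _ ≤ _ := by gcongr; exact le_add_self
    · have hle : N s ≤ N s / ε := by
        rw [ENNReal.le_div_iff_mul_le (Or.inl hε0) (Or.inl hεt)]
        exact mul_le_of_le_one_right' hε1.le
      obtain ⟨r, hr, hrN⟩ := exists_tail_eq ν hs.1.le hs1.2.le (x := N s / ε) hle hc.le
      change N r = N s / ε at hrN
      have hr0' : 0 < r := by
        refine lt_of_le_of_ne hr.1 ?_
        rintro rfl
        exact hc.ne hrN.symm
      have hr1 : r ∈ Ico (0:ℝ) 1 := ⟨hr.1, hr.2.trans_lt hs1.2⟩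
      have hrI : r ∈ Ioc (0:ℝ) r0 := ⟨hr0', hr.2.trans hs.2⟩
      have hdec : M s ≤ (1 - κ) * M r := by
        refine decay μ ν hα hβ hA0 h.hAt hs1.2 hr.2 (hN0 r hr1) (h.hWt r hr1) (h.hA r hr1)
          (h.hH1 s hs1) (h.hH2 r hr1 s hs1 hr.2) ?_
        change N s ≤ ε * N r
        rw [hrN, ENNReal.mul_div_cancel hε0 hεt]
      have hinv : (M r ^ α)⁻¹ ≤ x * (M s ^ α)⁻¹ := by
        rw [← div_eq_mul_inv, ENNReal.le_div_iff_mul_le (Or.inl (hMα0 s hs1)) (Or.inl (hMαt s)),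
          mul_comm, ← div_eq_mul_inv, ENNReal.div_le_iff (hMα0 r hr1) (hMαt r), hx,
          ← ENNReal.mul_rpow_of_nonneg _ _ hα.le]
        exact ENNReal.rpow_le_rpow hdec hα.le
      have hFr : F r ≤ Q * (M r ^ α)⁻¹ := by
        rw [← key r hrI]
        exact le_iSup₂ (f := fun r (_ : r ∈ Ioc (0:ℝ) r0) => F r * M r ^ α) r hrI
      have hsplit : F s ≤ F r + ∫⁻ y in Ioo r s, (M y ^ α)⁻¹ * (N y)⁻¹ ∂ν := by
        calc F s ≤ ∫⁻ y in Ioc 0 r ∪ Ioo r s, (M y ^ α)⁻¹ * (N y)⁻¹ ∂ν := by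
              apply lintegral_mono_set
              intro y hy
              rcases le_or_gt y r with h | h
              · exact Or.inl ⟨hy.1, h⟩
              · exact Or.inr ⟨h, hy.2⟩
          _ ≤ _ := lintegral_union_le _ _ _
          _ = _ := by
            congr 1
            exact setLIntegral_congr Ioo_ae_eq_Ioc.symm
      calc F s ≤ Q * (M r ^ α)⁻¹ + (M s ^ α)⁻¹ * (N s)⁻¹ * N r :=
            hsplit.trans (add_le_add hFr (hpiece r s hr.1 hs1.2))
        _ ≤ Q * (x * (M s ^ α)⁻¹) + (M s ^ α)⁻¹ * (N s)⁻¹ * (N s / ε) := by rw [hrN]; gcongr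
        _ = (x * Q) * (M s ^ α)⁻¹ + ((N s)⁻¹ * N s) * ε⁻¹ * (M s ^ α)⁻¹ := by
          rw [div_eq_mul_inv]; ring
        _ = (x * Q + ε⁻¹) * (M s ^ α)⁻¹ := by
          rw [ENNReal.inv_mul_cancel (hN0 s hs1) (hNt s), one_mul]; ring
  have hr0I : r0 ∈ Ioc (0:ℝ) r0 := ⟨hr0.1, le_rfl⟩
  change F r0 ≤ _
  rw [← key r0 hr0I]
  refine le_trans ?_ (absorb hQt hx1 hQle)
  exact le_iSup₂ (f := fun r (_ : r ∈ Ioc (0:ℝ) r0) => F r * M r ^ α) r0 hr0I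

lemma schur_cond {μ ν : Measure ℝ} [IsFiniteMeasure μ] [IsFiniteMeasure ν] [NullSingletonClass ν]
    {α β : ℝ} {W : ℝ → ℝ≥0∞} {A : ℝ≥0∞} (h : APData μ ν α β W A) :
    ∃ C : ℝ≥0∞, C ≠ ⊤ ∧ ∀ r ∈ Ioo (0:ℝ) 1,
      ∫⁻ s in Ioo 0 1, (W s + W r)⁻¹ * (ν (Ioo s 1) ^ α)⁻¹ ∂ν ≤ C * (μ (Ioo r 1) ^ α)⁻¹ := by
  obtain ⟨C1, hC1, h1⟩ := tail_L1 ν h.hα h.hβ h.hαβ h.hν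
  obtain ⟨C2, hC2, h2⟩ := tail_L2 h
  have hα := h.hα
  have hβ := h.hβ
  have hWinv : ∀ r ∈ Ico (0:ℝ) 1, (W r)⁻¹ ≤ A * ((μ (Ioo r 1) ^ α)⁻¹ * (ν (Ioo r 1) ^ β)⁻¹) := by
    intro r hr
    have hμ0 : μ (Ioo r 1) ^ α ≠ 0 := by
      rw [ennrpow_ne_zero_iff hα]; exact (h.hμ r hr).ne'
    have hν0 : ν (Ioo r 1) ^ β ≠ 0 := by
      rw [ennrpow_ne_zero_iff hβ]; exact (h.hν r hr).ne'
    have hμt : μ (Ioo r 1) ^ α ≠ ⊤ := ENNReal.rpow_ne_top_of_nonneg hα.le (measure_ne_top _ _)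
    have hνt : ν (Ioo r 1) ^ β ≠ ⊤ := ENNReal.rpow_ne_top_of_nonneg hβ.le (measure_ne_top _ _)
    rw [← ENNReal.mul_inv (Or.inl hμ0) (Or.inl hμt), ← div_eq_mul_inv,
      ENNReal.le_div_iff_mul_le (Or.inl (mul_ne_zero hμ0 hν0))
      (Or.inl (ENNReal.mul_ne_top hμt hνt)), mul_comm, ← div_eq_mul_inv,
      ENNReal.div_le_iff (h.hW0 r hr) (h.hWt r hr)]
    exact h.hA r hr
  have hsplit : ∀ f : ℝ → ℝ≥0∞, ∀ r ∈ Ioo (0:ℝ) 1, ∫⁻ s in Ioo 0 1, f s ∂ν ≤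
      ∫⁻ s in Ioo 0 r, f s ∂ν + ∫⁻ s in Ioo r 1, f s ∂ν := by
    intro f r hr
    calc ∫⁻ s in Ioo 0 1, f s ∂ν ≤ ∫⁻ s in Ioc 0 r ∪ Ioo r 1, f s ∂ν := by
          apply lintegral_mono_set
          intro y hy
          rcases le_or_gt y r with h | h
          · exact Or.inl ⟨hy.1, h⟩
          · exact Or.inr ⟨h, hy.2⟩
      _ ≤ _ := lintegral_union_le _ _ _
      _ = _ := by
        congr 1
        exact setLIntegral_congr Ioo_ae_eq_Ioc.symm
  refine ⟨A * C2 + A * C1, ENNReal.add_ne_top.2 ⟨ENNReal.mul_ne_top h.hAt hC2,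
    ENNReal.mul_ne_top h.hAt hC1⟩, ?_⟩
  intro r hr
  have hr' : r ∈ Ico (0:ℝ) 1 := ⟨hr.1.le, hr.2⟩
  refine (hsplit _ r hr).trans ?_
  rw [add_mul]
  refine add_le_add ?_ ?_
  · calc ∫⁻ s in Ioo 0 r, (W s + W r)⁻¹ * (ν (Ioo s 1) ^ α)⁻¹ ∂ν
        ≤ ∫⁻ s in Ioo 0 r, A * ((μ (Ioo s 1) ^ α)⁻¹ * (ν (Ioo s 1))⁻¹) ∂ν := by
          refine setLIntegral_mono' measurableSet_Ioo fun s hs => ?_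
          have hs' : s ∈ Ico (0:ℝ) 1 := ⟨hs.1.le, hs.2.trans hr.2⟩
          have hn0 := (h.hν s hs').ne'
          have hnt : ν (Ioo s 1) ≠ ⊤ := measure_ne_top _ _
          calc (W s + W r)⁻¹ * (ν (Ioo s 1) ^ α)⁻¹ ≤ (W s)⁻¹ * (ν (Ioo s 1) ^ α)⁻¹ := by
                gcongr; exact le_self_add
            _ ≤ A * ((μ (Ioo s 1) ^ α)⁻¹ * (ν (Ioo s 1) ^ β)⁻¹) * (ν (Ioo s 1) ^ α)⁻¹ := by
                gcongr; exact hWinv s hs'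
            _ = A * ((μ (Ioo s 1) ^ α)⁻¹ * ((ν (Ioo s 1) ^ β)⁻¹ * (ν (Ioo s 1) ^ α)⁻¹)) := by ring
            _ = A * ((μ (Ioo s 1) ^ α)⁻¹ * (ν (Ioo s 1))⁻¹) := by
                rw [← ENNReal.rpow_neg, ← ENNReal.rpow_neg, ← ENNReal.rpow_neg,
                  ← ENNReal.rpow_add _ _ hn0 hnt]
                congr 2
                rw [show -β + -α = -1 by linarith [h.hαβ], ENNReal.rpow_neg_one]
      _ = A * ∫⁻ s in Ioo 0 r, ((μ (Ioo s 1) ^ α)⁻¹ * (ν (Ioo s 1))⁻¹) ∂ν :=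
          lintegral_const_mul' _ _ h.hAt
      _ ≤ A * (C2 * (μ (Ioo r 1) ^ α)⁻¹) := by gcongr; exact h2 r hr
      _ = _ := by ring
  · have hn0 : ν (Ioo r 1) ^ β ≠ 0 := by
      rw [ennrpow_ne_zero_iff hβ]; exact (h.hν r hr').ne'
    have hnt : ν (Ioo r 1) ^ β ≠ ⊤ := ENNReal.rpow_ne_top_of_nonneg hβ.le (measure_ne_top _ _)
    calc ∫⁻ s in Ioo r 1, (W s + W r)⁻¹ * (ν (Ioo s 1) ^ α)⁻¹ ∂ν
        ≤ ∫⁻ s in Ioo r 1, (W r)⁻¹ * (ν (Ioo s 1) ^ α)⁻¹ ∂ν := by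
          refine lintegral_mono fun s => ?_
          gcongr; exact le_add_self
      _ = (W r)⁻¹ * ∫⁻ s in Ioo r 1, (ν (Ioo s 1) ^ α)⁻¹ ∂ν :=
          lintegral_const_mul' _ _ (ENNReal.inv_ne_top.2 (h.hW0 r hr'))
      _ ≤ (A * ((μ (Ioo r 1) ^ α)⁻¹ * (ν (Ioo r 1) ^ β)⁻¹)) * (C1 * ν (Ioo r 1) ^ β) := by
          gcongr
          · exact hWinv r hr'
          · exact h1 r hr'
      _ = A * C1 * (μ (Ioo r 1) ^ α)⁻¹ * ((ν (Ioo r 1) ^ β)⁻¹ * ν (Ioo r 1) ^ β) := by ring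
      _ = _ := by rw [ENNReal.inv_mul_cancel hn0 hnt, mul_one]

lemma restrict_density (a : ℝ → ℝ≥0∞) :
    ((volume.restrict (Ioo (0:ℝ) 1)).withDensity a).restrict (Ioo 0 1) =
      (volume.restrict (Ioo (0:ℝ) 1)).withDensity a := by
  rw [restrict_withDensity measurableSet_Ioo, Measure.restrict_restrict measurableSet_Ioo,
    inter_self]

lemma radial_bound {p q : ℝ} (hpq : p.HolderConjugate q) {a b : ℝ → ℝ≥0∞} (ha : Measurable a)
    (hb : Measurable b) {W : ℝ → ℝ≥0∞} {A : ℝ≥0∞}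
    [IsFiniteMeasure ((volume.restrict (Ioo (0:ℝ) 1)).withDensity a)]
    [IsFiniteMeasure ((volume.restrict (Ioo (0:ℝ) 1)).withDensity b)]
    (h : APData ((volume.restrict (Ioo (0:ℝ) 1)).withDensity a)
      ((volume.restrict (Ioo (0:ℝ) 1)).withDensity b) (1 / p) (1 / q) W A) :
    ∃ C : ℝ≥0∞, C ≠ ⊤ ∧ ∀ g : ℝ → ℝ≥0∞, Measurable g →
      ∫⁻ r in Ioo 0 1, (∫⁻ s in Ioo 0 1, g s * (a s ^ (1 / p) * b s ^ (1 / q)) * (W s + W r)⁻¹) ^ p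
        * a r ≤ C * ∫⁻ r in Ioo 0 1, g r ^ p * a r := by
  have : NullSingletonClass ((volume.restrict (Ioo (0:ℝ) 1)).withDensity a) := inferInstance
  have : NullSingletonClass ((volume.restrict (Ioo (0:ℝ) 1)).withDensity b) := inferInstance
  obtain ⟨C1, hC1, h1⟩ := schur_cond h
  obtain ⟨C2, hC2, h2⟩ := schur_cond h.symm
  rw [restrict_density] at h1 h2
  set lam := volume.restrict (Ioo (0:ℝ) 1) with hlam
  set μ := lam.withDensity a with hμ
  set ν := lam.withDensity b with hν
  set M : ℝ → ℝ≥0∞ := fun s => μ (Ioo s 1) with hM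
  set N : ℝ → ℝ≥0∞ := fun s => ν (Ioo s 1) with hN
  have hMm : Measurable M := (tail_anti μ).measurable
  have hNm : Measurable N := (tail_anti ν).measurable
  have hWm : Measurable W := h.hWa.measurable
  have hMt : ∀ r, M r ≠ ⊤ := fun r => measure_ne_top _ _
  have hNt : ∀ r, N r ≠ ⊤ := fun r => measure_ne_top _ _
  have hM0 : ∀ r ∈ Ico (0:ℝ) 1, M r ≠ 0 := fun r hr => (h.hμ r hr).ne'
  have hN0 : ∀ r ∈ Ico (0:ℝ) 1, N r ≠ 0 := fun r hr => (h.hν r hr).ne'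
  have hp := hpq.pos
  have hq := hpq.symm.pos
  have hp0 : p ≠ 0 := hp.ne'
  have hq0 : q ≠ 0 := hq.ne'
  have hsum : 1 / p + 1 / q = 1 := h.hαβ
  refine ⟨C1 ^ (p / q) * C2, ENNReal.mul_ne_top (ENNReal.rpow_ne_top_of_nonneg (by positivity) hC1)
    hC2, ?_⟩
  intro g hg
  -- convert the Schur conditions
  have h1' : ∀ r ∈ Ioo (0:ℝ) 1, ∫⁻ s in Ioo 0 1, b s * (W s + W r)⁻¹ * (N s ^ (1 / p))⁻¹ ≤
      C1 * (M r ^ (1 / p))⁻¹ := by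
    intro r hr
    refine le_trans (le_of_eq ?_) (h1 r hr)
    rw [hν, lintegral_withDensity_eq_lintegral_mul₀ hb.aemeasurable]
    · refine lintegral_congr fun s => ?_
      simp only [Pi.mul_apply, hN, mul_assoc]
      rfl
    · apply Measurable.aemeasurable
      change Measurable fun s => (W s + W r)⁻¹ * (N s ^ (1 / p))⁻¹
      fun_prop
  have h2' : ∀ s ∈ Ioo (0:ℝ) 1, ∫⁻ r in Ioo 0 1, a r * (W s + W r)⁻¹ * (M r ^ (1 / q))⁻¹ ≤
      C2 * (N s ^ (1 / q))⁻¹ := by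
    intro r hr
    refine le_trans (le_of_eq ?_) (h2 r hr)
    rw [hμ, lintegral_withDensity_eq_lintegral_mul₀ ha.aemeasurable]
    · refine lintegral_congr fun s => ?_
      simp only [Pi.mul_apply, hM, mul_assoc, add_comm]
      rfl
    · apply Measurable.aemeasurable
      change Measurable fun s => (W s + W r)⁻¹ * (M s ^ (1 / q))⁻¹
      fun_prop
  -- Hölder
  have hold : ∀ r ∈ Ioo (0:ℝ) 1,
      (∫⁻ s in Ioo 0 1, g s * (a s ^ (1 / p) * b s ^ (1 / q)) * (W s + W r)⁻¹) ^ p ≤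
      C1 ^ (p / q) * (M r ^ (1 / q))⁻¹ *
        ∫⁻ s in Ioo 0 1, g s ^ p * a s * (W s + W r)⁻¹ * N s ^ (1 / q) := by
    intro r hr
    have hr' : r ∈ Ico (0:ℝ) 1 := ⟨hr.1.le, hr.2⟩
    set F : ℝ → ℝ≥0∞ := fun s => g s * a s ^ (1 / p) * ((W s + W r)⁻¹) ^ (1 / p) *
      N s ^ (1 / (p * q)) with hF
    set E : ℝ → ℝ≥0∞ := fun s => b s ^ (1 / q) * ((W s + W r)⁻¹) ^ (1 / q) *
      (N s ^ (1 / (p * q)))⁻¹ with hE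
    have hFm : Measurable F := by fun_prop
    have hEm : Measurable E := by fun_prop
    have e0 : ∫⁻ s in Ioo 0 1, g s * (a s ^ (1 / p) * b s ^ (1 / q)) * (W s + W r)⁻¹ =
        ∫⁻ s in Ioo 0 1, (F * E) s := by
      refine setLIntegral_congr_fun measurableSet_Ioo fun s hs => ?_
      have hs' : s ∈ Ico (0:ℝ) 1 := ⟨hs.1.le, hs.2⟩
      have hk : (W s + W r)⁻¹ = ((W s + W r)⁻¹) ^ (1 / p) * ((W s + W r)⁻¹) ^ (1 / q) := by
        rw [← ENNReal.rpow_add_of_nonneg _ _ (by positivity) (by positivity), hsum,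
          ENNReal.rpow_one]
      have hn : N s ^ (1 / (p * q)) * (N s ^ (1 / (p * q)))⁻¹ = 1 := by
        apply ENNReal.mul_inv_cancel
        · rw [ennrpow_ne_zero_iff (by positivity)]; exact hN0 s hs'
        · exact ENNReal.rpow_ne_top_of_nonneg (by positivity) (hNt s)
      simp only [Pi.mul_apply, hF, hE]
      calc g s * (a s ^ (1 / p) * b s ^ (1 / q)) * (W s + W r)⁻¹
          = g s * (a s ^ (1 / p) * b s ^ (1 / q)) *
            (((W s + W r)⁻¹) ^ (1 / p) * ((W s + W r)⁻¹) ^ (1 / q)) *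
            (N s ^ (1 / (p * q)) * (N s ^ (1 / (p * q)))⁻¹) := by rw [hn, mul_one, ← hk]
        _ = _ := by ring
    have e1 : ∫⁻ s in Ioo 0 1, F s ^ p =
        ∫⁻ s in Ioo 0 1, g s ^ p * a s * (W s + W r)⁻¹ * N s ^ (1 / q) := by
      refine lintegral_congr fun s => ?_
      simp only [hF]
      rw [ENNReal.mul_rpow_of_nonneg _ _ hp.le, ENNReal.mul_rpow_of_nonneg _ _ hp.le,
        ENNReal.mul_rpow_of_nonneg _ _ hp.le, ← ENNReal.rpow_mul, ← ENNReal.rpow_mul,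
        ← ENNReal.rpow_mul, one_div_mul_cancel hp0, ENNReal.rpow_one, ENNReal.rpow_one]
      congr 2
      field_simp
    have e2 : ∫⁻ s in Ioo 0 1, E s ^ q ≤ C1 * (M r ^ (1 / p))⁻¹ := by
      refine le_trans (le_of_eq ?_) (h1' r hr)
      refine lintegral_congr fun s => ?_
      simp only [hE]
      rw [ENNReal.mul_rpow_of_nonneg _ _ hq.le, ENNReal.mul_rpow_of_nonneg _ _ hq.le,
        ENNReal.inv_rpow (N s ^ _), ← ENNReal.rpow_mul, ← ENNReal.rpow_mul,
        ← ENNReal.rpow_mul, one_div_mul_cancel hq0, ENNReal.rpow_one, ENNReal.rpow_one]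
      congr 3
      field_simp
    rw [e0]
    have e3 := ENNReal.lintegral_mul_le_Lp_mul_Lq lam hpq hFm.aemeasurable hEm.aemeasurable
    calc (∫⁻ s in Ioo 0 1, (F * E) s) ^ p
        ≤ ((∫⁻ s in Ioo 0 1, F s ^ p) ^ (1 / p) * (C1 * (M r ^ (1 / p))⁻¹) ^ (1 / q)) ^ p := by
          refine ENNReal.rpow_le_rpow (e3.trans ?_) hp.le
          gcongr
      _ = (∫⁻ s in Ioo 0 1, F s ^ p) * (C1 ^ (p / q) * (M r ^ (1 / q))⁻¹) := by
          rw [ENNReal.mul_rpow_of_nonneg _ _ hp.le, ← ENNReal.rpow_mul, ← ENNReal.rpow_mul,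
            one_div_mul_cancel hp0, ENNReal.rpow_one, ENNReal.mul_rpow_of_nonneg _ _ (by positivity),
            ENNReal.inv_rpow, ← ENNReal.rpow_mul]
          congr 3
          · field_simp
          · congr 1; field_simp
      _ = _ := by rw [e1]; ring
  calc ∫⁻ r in Ioo 0 1, (∫⁻ s in Ioo 0 1, g s * (a s ^ (1 / p) * b s ^ (1 / q)) *
        (W s + W r)⁻¹) ^ p * a r
      ≤ ∫⁻ r in Ioo 0 1, (C1 ^ (p / q) * (M r ^ (1 / q))⁻¹ *
        ∫⁻ s in Ioo 0 1, g s ^ p * a s * (W s + W r)⁻¹ * N s ^ (1 / q)) * a r := by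
        refine setLIntegral_mono' measurableSet_Ioo fun r hr => ?_
        gcongr
        exact hold r hr
    _ = ∫⁻ r in Ioo 0 1, ∫⁻ s in Ioo 0 1, C1 ^ (p / q) * (g s ^ p * a s * N s ^ (1 / q)) *
          (a r * (W s + W r)⁻¹ * (M r ^ (1 / q))⁻¹) := by
        refine lintegral_congr fun r => ?_
        rw [mul_comm, ← mul_assoc, ← lintegral_const_mul _ (by fun_prop)]
        refine lintegral_congr fun s => ?_
        ring
    _ = ∫⁻ s in Ioo 0 1, ∫⁻ r in Ioo 0 1, C1 ^ (p / q) * (g s ^ p * a s * N s ^ (1 / q)) *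
          (a r * (W s + W r)⁻¹ * (M r ^ (1 / q))⁻¹) := by
        refine lintegral_lintegral_swap ?_
        apply Measurable.aemeasurable
        simp only [Function.uncurry_def]
        fun_prop
    _ = ∫⁻ s in Ioo 0 1, C1 ^ (p / q) * (g s ^ p * a s * N s ^ (1 / q)) * ∫⁻ r in Ioo 0 1,
          (a r * (W s + W r)⁻¹ * (M r ^ (1 / q))⁻¹) := by
        refine lintegral_congr fun s => ?_
        rw [lintegral_const_mul _ (by fun_prop)]
    _ ≤ ∫⁻ s in Ioo 0 1, C1 ^ (p / q) * C2 * (g s ^ p * a s) := by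
        refine setLIntegral_mono' measurableSet_Ioo fun s hs => ?_
        have hs' : s ∈ Ico (0:ℝ) 1 := ⟨hs.1.le, hs.2⟩
        have hn : N s ^ (1 / q) * (N s ^ (1 / q))⁻¹ = 1 := by
          apply ENNReal.mul_inv_cancel
          · rw [ennrpow_ne_zero_iff (by positivity)]; exact hN0 s hs'
          · exact ENNReal.rpow_ne_top_of_nonneg (by positivity) (hNt s)
        calc _ ≤ C1 ^ (p / q) * (g s ^ p * a s * N s ^ (1 / q)) * (C2 * (N s ^ (1 / q))⁻¹) := by
              gcongr; exact h2' s hs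
          _ = C1 ^ (p / q) * C2 * (g s ^ p * a s) * (N s ^ (1 / q) * (N s ^ (1 / q))⁻¹) := by ring
          _ = _ := by rw [hn, mul_one]
    _ = _ := lintegral_const_mul _ (by fun_prop)

/-! ### Facts about radial weights -/

lemma ae_sub {P : ℝ → Prop} (h : ∀ᵐ s ∂(volume.restrict (Ioo (0:ℝ) 1)), P s) {r t : ℝ}
    (hr : 0 ≤ r) (ht : t ≤ 1) : ∀ᵐ s ∂(volume.restrict (Ioo r t)), P s :=
  ae_restrict_of_ae_restrict_of_subset (Ioo_subset_Ioo hr ht) h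

lemma wd_Ioo (a : ℝ → ℝ≥0∞) {r t : ℝ} (hr : 0 ≤ r) (ht : t ≤ 1) :
    ((volume.restrict (Ioo (0:ℝ) 1)).withDensity a) (Ioo r t) = ∫⁻ s in Ioo r t, a s := by
  rw [withDensity_apply _ measurableSet_Ioo, Measure.restrict_restrict measurableSet_Ioo,
    inter_eq_left.2 (Ioo_subset_Ioo hr ht)]

lemma rw_aem {w : ℝ → ℝ} (hw : IsRadialWeight w) :
    AEMeasurable w (volume.restrict (Ioo (0:ℝ) 1)) :=
  (hw.2.1.mono_set Ioo_subset_Ico_self).aestronglyMeasurable.aemeasurable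

lemma rw_intble {w : ℝ → ℝ} (hw : IsRadialWeight w) {r : ℝ} (hr : 0 ≤ r) :
    IntegrableOn (fun s => s * w s) (Ioo r 1) := by
  have h1 : IntegrableOn w (Ioo r 1) :=
    hw.2.1.mono_set (fun x hx => ⟨hr.trans hx.1.le, hx.2⟩)
  refine Integrable.mono' h1.norm ?_ ?_
  · exact (measurable_id.aemeasurable.mul h1.aestronglyMeasurable.aemeasurable).aestronglyMeasurable
  · refine (ae_restrict_iff' measurableSet_Ioo).2 (Filter.Eventually.of_forall fun s hs => ?_)
    rw [norm_mul]
    have : ‖s‖ ≤ 1 := by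
      rw [Real.norm_eq_abs, abs_of_nonneg (hr.trans hs.1.le)]; exact hs.2.le
    exact mul_le_of_le_one_left (norm_nonneg _) this

lemma rw_hat1 {w : ℝ → ℝ} (hw : IsRadialWeight w) {r : ℝ} (hr : 0 ≤ r) :
    ENNReal.ofReal (hat1 w r) = ∫⁻ s in Ioo r 1, ENNReal.ofReal (s * w s) := by
  refine ofReal_integral_eq_lintegral_ofReal (rw_intble hw hr) ?_
  refine (ae_restrict_iff' measurableSet_Ioo).2 (Filter.Eventually.of_forall fun s hs => ?_)
  exact mul_nonneg (hr.trans hs.1.le) (hw.1 s ⟨hr.trans hs.1.le, hs.2⟩)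

lemma rw_pos {w : ℝ → ℝ} (hw : IsRadialWeight w) {r : ℝ} (hr : r ∈ Ico (0:ℝ) 1) :
    0 < hat1 w r := by
  have hnn : 0 ≤ᵐ[volume.restrict (Ioo r 1)] fun s => s * w s := by
    refine (ae_restrict_iff' measurableSet_Ioo).2 (Filter.Eventually.of_forall fun s hs => ?_)
    exact mul_nonneg (hr.1.trans hs.1.le) (hw.1 s ⟨hr.1.trans hs.1.le, hs.2⟩)
  have h0 : 0 ≤ hat1 w r := integral_nonneg_of_ae hnn
  refine lt_of_le_of_ne h0 fun h => ?_
  have h2 := (integral_eq_zero_iff_of_nonneg_ae hnn (rw_intble hw hr.1)).1 h.symm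
  have h3 : hatw w r = 0 := by
    refine integral_eq_zero_of_ae ?_
    filter_upwards [h2, ae_restrict_mem measurableSet_Ioo] with s hs hs'
    rcases mul_eq_zero.1 hs with h | h
    · exact absurd h (hr.1.trans_lt hs'.1).ne'
    · exact h
  exact (hw.2.2 r hr).ne' h3

lemma rw_hat1_nonneg {w : ℝ → ℝ} (hw : IsRadialWeight w) {r : ℝ} (hr : r ∈ Ico (0:ℝ) 1) :
    0 ≤ hat1 w r := (rw_pos hw hr).le

lemma holder_split {p q : ℝ} (hpq : p.HolderConjugate q) {a b : ℝ → ℝ≥0∞} (ha : Measurable a)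
    (hb : Measurable b) (S : Set ℝ) :
    ∫⁻ s in S, a s ^ (1 / p) * b s ^ (1 / q) ≤
      (∫⁻ s in S, a s) ^ (1 / p) * (∫⁻ s in S, b s) ^ (1 / q) := by
  have := ENNReal.lintegral_mul_le_Lp_mul_Lq (volume.restrict S) hpq
    (f := fun s => a s ^ (1 / p)) (g := fun s => b s ^ (1 / q))
    (by fun_prop) (by fun_prop)
  refine this.trans (le_of_eq ?_)
  congr 2 <;> refine lintegral_congr fun s => ?_
  · rw [← ENNReal.rpow_mul, one_div_mul_cancel hpq.pos.ne', ENNReal.rpow_one]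
  · rw [← ENNReal.rpow_mul, one_div_mul_cancel hpq.symm.pos.ne', ENNReal.rpow_one]

lemma density_identity {p q : ℝ} (hpq : p.HolderConjugate q) {s x y : ℝ} (hs : 0 < s)
    (hx : 0 ≤ x) (hy : 0 ≤ y)
    (hfin : (ENNReal.ofReal x / ENNReal.ofReal y ^ (1 / p)) ^ q ≠ ⊤) :
    ENNReal.ofReal (s * y) ^ (1 / p) * (ENNReal.ofReal s *
      (ENNReal.ofReal x / ENNReal.ofReal y ^ (1 / p)) ^ q) ^ (1 / q) = ENNReal.ofReal (s * x) := by
  have hp := hpq.pos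
  have hq := hpq.symm.pos
  have hsum : 1 / p + 1 / q = 1 := by
    have := hpq.inv_add_inv_eq_one
    simpa [one_div] using this
  rcases hy.eq_or_lt with rfl | hy
  · have hx0 : x = 0 := by
      by_contra hne
      apply hfin
      have : 0 < x := lt_of_le_of_ne hx (Ne.symm hne)
      rw [ENNReal.ofReal_zero, ENNReal.zero_rpow_of_pos (by positivity), ENNReal.div_zero,
        ENNReal.top_rpow_of_pos hq]
      simpa using this
    subst hx0
    simp [hp]
  · rw [ENNReal.mul_rpow_of_nonneg _ _ (by positivity), ← ENNReal.rpow_mul,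
      mul_one_div_cancel hq.ne', ENNReal.rpow_one, ENNReal.ofReal_mul hs.le,
      ENNReal.mul_rpow_of_nonneg _ _ (by positivity), ENNReal.ofReal_mul hs.le]
    have hy0 : ENNReal.ofReal y ^ (1 / p) ≠ 0 := by
      rw [ennrpow_ne_zero_iff (by positivity)]; simpa using hy
    have hyt : ENNReal.ofReal y ^ (1 / p) ≠ ⊤ :=
      ENNReal.rpow_ne_top_of_nonneg (by positivity) (by simp)
    calc ENNReal.ofReal s ^ (1 / p) * ENNReal.ofReal y ^ (1 / p) *
        (ENNReal.ofReal s ^ (1 / q) * (ENNReal.ofReal x / ENNReal.ofReal y ^ (1 / p)))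
        = (ENNReal.ofReal s ^ (1 / p) * ENNReal.ofReal s ^ (1 / q)) *
          (ENNReal.ofReal y ^ (1 / p) * (ENNReal.ofReal x / ENNReal.ofReal y ^ (1 / p))) := by ring
      _ = _ := by
        rw [← ENNReal.rpow_add_of_nonneg _ _ (by positivity) (by positivity), hsum,
          ENNReal.rpow_one, ENNReal.mul_div_cancel hy0 hyt]

lemma conj_exp {p : ℝ} (hp : 1 < p) : p.HolderConjugate (p / (p - 1)) :=
  Real.HolderConjugate.conjExponent hp

lemma one_div_conj {p : ℝ} (hp : 1 < p) : 1 / (p / (p - 1)) = 1 - 1 / p := by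
  have : p - 1 ≠ 0 := by linarith
  have : p ≠ 0 := by linarith
  field_simp

lemma sigmaE_measurable {p : ℝ} {w v : ℝ → ℝ} (hw : Measurable w) (hv : Measurable v) :
    Measurable (sigmaE p w v) := by
  unfold sigmaE
  fun_prop

lemma sufficiency_radial {p : ℝ} (hp : 1 < p) {w v : ℝ → ℝ}
    (hw : IsRadialWeight w) (hv : IsRadialWeight v) (hAp : ApE p w v < ⊤) :
    ∃ C : ℝ≥0∞, C ≠ ⊤ ∧ ∀ g : ℝ → ℝ≥0∞, Measurable g →
      ∫⁻ r in Ioo 0 1, (∫⁻ s in Ioo 0 1, g s * ENNReal.ofReal (s * w s) /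
        ENNReal.ofReal (hat1 w s + hat1 w r)) ^ p * ENNReal.ofReal (r * v r) ≤
      C * ∫⁻ r in Ioo 0 1, g r ^ p * ENNReal.ofReal (r * v r) := by
  set q := p / (p - 1) with hq
  have hpq : p.HolderConjugate q := conj_exp hp
  have hq1 : 1 / q = 1 - 1 / p := one_div_conj hp
  have hp0 := hpq.pos
  have hq0 := hpq.symm.pos
  have hsum : 1 / p + 1 / q = 1 := by rw [hq1]; ring
  obtain ⟨w', hw'm, hw'⟩ := rw_aem hw
  obtain ⟨v', hv'm, hv'⟩ := rw_aem hv
  set a : ℝ → ℝ≥0∞ := fun s => ENNReal.ofReal (s * v' s) with ha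
  set b : ℝ → ℝ≥0∞ := fun s => ENNReal.ofReal s * sigmaE p w' v' s with hb
  have ham : Measurable a := by fun_prop
  have hbm : Measurable b := (ENNReal.measurable_ofReal).mul (sigmaE_measurable hw'm hv'm)
  set lam := volume.restrict (Ioo (0:ℝ) 1) with hlam
  have haeq : ∀ᵐ s ∂lam, ENNReal.ofReal (s * v s) = a s := by
    filter_upwards [hv'] with s hs
    simp [ha, hs]
  have hbeq : ∀ᵐ s ∂lam, ENNReal.ofReal s * sigmaE p w v s = b s := by
    filter_upwards [hv', hw'] with s hs hs2
    simp [hb, sigmaE, hs, hs2]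
  set W : ℝ → ℝ≥0∞ := fun r => (lam.withDensity fun s => ENNReal.ofReal (s * w s)) (Ioo r 1)
    with hW
  have hWr : ∀ r, 0 ≤ r → W r = ENNReal.ofReal (hat1 w r) := by
    intro r hr
    rw [rw_hat1 hw hr, hW]
    exact wd_Ioo _ hr le_rfl
  have hμI : ∀ r t, 0 ≤ r → t ≤ 1 → (lam.withDensity a) (Ioo r t) =
      ∫⁻ s in Ioo r t, ENNReal.ofReal (s * v s) := by
    intro r t hr ht
    rw [wd_Ioo _ hr ht]
    exact lintegral_congr_ae ((ae_sub haeq hr ht).mono fun _ h => h.symm)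
  have hνI : ∀ r t, 0 ≤ r → t ≤ 1 → (lam.withDensity b) (Ioo r t) =
      ∫⁻ s in Ioo r t, ENNReal.ofReal s * sigmaE p w v s := by
    intro r t hr ht
    rw [wd_Ioo _ hr ht]
    exact lintegral_congr_ae ((ae_sub hbeq hr ht).mono fun _ h => h.symm)
  have hμpos : ∀ r ∈ Ico (0:ℝ) 1, 0 < (lam.withDensity a) (Ioo r 1) := by
    intro r hr
    rw [hμI r 1 hr.1 le_rfl, ← rw_hat1 hv hr.1]
    simpa using rw_pos hv hr
  have hWpos : ∀ r ∈ Ico (0:ℝ) 1, W r ≠ 0 := by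
    intro r hr
    rw [hWr r hr.1]
    simpa using rw_pos hw hr
  have hWt : ∀ r ∈ Ico (0:ℝ) 1, W r ≠ ⊤ := by
    intro r hr
    rw [hWr r hr.1]
    simp
  have hAr : ∀ r ∈ Ico (0:ℝ) 1, (lam.withDensity a) (Ioo r 1) ^ (1 / p) *
      (lam.withDensity b) (Ioo r 1) ^ (1 / q) ≤ ApE p w v * W r := by
    intro r hr
    rw [← ENNReal.div_le_iff (hWpos r hr) (hWt r hr), hμI r 1 hr.1 le_rfl, hνI r 1 hr.1 le_rfl,
      hWr r hr.1, hq1]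
    exact le_iSup₂ (f := fun r (_ : r ∈ Ico (0:ℝ) 1) =>
      (∫⁻ s in Set.Ioo r 1, ENNReal.ofReal (s * v s)) ^ (1 / p) *
      (∫⁻ s in Set.Ioo r 1, ENNReal.ofReal s * sigmaE p w v s) ^ (1 - 1 / p) /
      ENNReal.ofReal (hat1 w r)) r hr
  have h0I : (0:ℝ) ∈ Ico (0:ℝ) 1 := ⟨le_rfl, zero_lt_one⟩
  have hmass : ∀ c : ℝ → ℝ≥0∞, (lam.withDensity c) univ = (lam.withDensity c) (Ioo 0 1) := by
    intro c
    calc (lam.withDensity c) univ = ((lam.withDensity c).restrict (Ioo 0 1)) univ := by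
          rw [restrict_density]
      _ = _ := Measure.restrict_apply_univ _
  have fa : IsFiniteMeasure (lam.withDensity a) := by
    refine ⟨?_⟩
    rw [hmass, hμI 0 1 le_rfl le_rfl, ← rw_hat1 hv le_rfl]
    exact ENNReal.ofReal_lt_top
  have hbt : (lam.withDensity b) (Ioo 0 1) ≠ ⊤ := by
    intro htop
    have h1 := hAr 0 h0I
    rw [htop, ENNReal.top_rpow_of_pos (by positivity), ENNReal.mul_top] at h1
    · exact (ENNReal.mul_ne_top hAp.ne (hWt 0 h0I)) (top_le_iff.1 h1)
    · rw [ennrpow_ne_zero_iff (by positivity)]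
      exact (hμpos 0 h0I).ne'
  have fb : IsFiniteMeasure (lam.withDensity b) := ⟨by rw [hmass]; exact hbt.lt_top⟩
  have hden : ∀ᵐ s ∂lam, ENNReal.ofReal (s * w s) = a s ^ (1 / p) * b s ^ (1 / q) := by
    have hlt : ∀ᵐ s ∂lam, b s < ⊤ := by
      refine ae_lt_top hbm ?_
      rw [wd_Ioo b le_rfl le_rfl] at hbt
      exact hbt
    filter_upwards [haeq, hbeq, hlt, ae_restrict_mem measurableSet_Ioo] with s h1 h2 h3 h4
    have h4' : s ∈ Ico (0:ℝ) 1 := ⟨h4.1.le, h4.2⟩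
    rw [← h1, ← h2, sigmaE, density_identity hpq h4.1 (hw.1 s h4') (hv.1 s h4')]
    intro htop
    rw [← h2, sigmaE, ← hq, htop, ENNReal.mul_top] at h3
    · exact lt_irrefl _ h3
    · simpa using h4.1
  have hHol : ∀ r t, 0 ≤ r → t ≤ 1 → ∫⁻ s in Ioo r t, ENNReal.ofReal (s * w s) ≤
      (lam.withDensity a) (Ioo r t) ^ (1 / p) * (lam.withDensity b) (Ioo r t) ^ (1 / q) := by
    intro r t hr ht
    rw [wd_Ioo _ hr ht, wd_Ioo _ hr ht, lintegral_congr_ae (ae_sub hden hr ht)]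
    exact holder_split hpq ham hbm _
  have hH1 : ∀ r ∈ Ico (0:ℝ) 1, W r ≤ (lam.withDensity a) (Ioo r 1) ^ (1 / p) *
      (lam.withDensity b) (Ioo r 1) ^ (1 / q) := by
    intro r hr
    rw [hWr r hr.1, rw_hat1 hw hr.1]
    exact hHol r 1 hr.1 le_rfl
  have hdata : APData (lam.withDensity a) (lam.withDensity b) (1 / p) (1 / q) W
      (max 1 (ApE p w v)) :=
    { hα := by positivity
      hβ := by positivity
      hαβ := hsum
      hA1 := le_max_left _ _
      hAt := by simp [hAp.ne]
      hμ := hμpos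
      hν := by
        intro r hr
        by_contra hcon
        have h0 : (lam.withDensity b) (Ioo r 1) = 0 := by simpa using hcon
        have := hH1 r hr
        rw [h0, ENNReal.zero_rpow_of_pos (by positivity), mul_zero] at this
        exact hWpos r hr (le_zero_iff.1 this)
      hWa := tail_anti _
      hWt := hWt
      hW0 := hWpos
      hA := by
        intro r hr
        refine (hAr r hr).trans ?_
        gcongr
        exact le_max_right _ _
      hH1 := hH1
      hH2 := by
        intro r hr s hs hrs
        refine le_trans ?_ (add_le_add_right (hHol r s hr.1 hs.2.le) (W s))
        rw [hWr r hr.1, rw_hat1 hw hr.1, hWr s hs.1, rw_hat1 hw hs.1, add_comm]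
        calc ∫⁻ x in Ioo r 1, ENNReal.ofReal (x * w x)
            ≤ ∫⁻ x in Ioc r s ∪ Ioo s 1, ENNReal.ofReal (x * w x) := by
              apply lintegral_mono_set
              intro y hy
              rcases le_or_gt y s with h | h
              · exact Or.inl ⟨hy.1, h⟩
              · exact Or.inr ⟨h, hy.2⟩
          _ ≤ _ := lintegral_union_le _ _ _
          _ = _ := by
            congr 1
            exact setLIntegral_congr Ioo_ae_eq_Ioc.symm }
  obtain ⟨C, hC, hmain⟩ := radial_bound hpq ham hbm hdata
  refine ⟨C, hC, fun g hg => ?_⟩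
  have hR : ∫⁻ r in Ioo 0 1, g r ^ p * ENNReal.ofReal (r * v r) =
      ∫⁻ r in Ioo 0 1, g r ^ p * a r := by
    refine lintegral_congr_ae ?_
    filter_upwards [haeq] with r hr
    rw [hr]
  rw [hR]
  refine le_trans (le_of_eq ?_) (hmain g hg)
  refine lintegral_congr_ae ?_
  filter_upwards [haeq, ae_restrict_mem measurableSet_Ioo] with r hr hr1
  rw [hr]
  congr 2
  refine lintegral_congr_ae ?_
  filter_upwards [hden, ae_restrict_mem measurableSet_Ioo] with s hs hs1
  rw [hs, div_eq_mul_inv, hWr s hs1.1.le, hWr r hr1.1.le,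
    ENNReal.ofReal_add (rw_hat1_nonneg hw ⟨hs1.1.le, hs1.2⟩) (rw_hat1_nonneg hw ⟨hr1.1.le, hr1.2⟩)]

/-! ### Polar coordinates -/

lemma polar_set (g : ℂ → ℝ≥0∞) : ∫⁻ z in Metric.ball (0:ℂ) 1, g z =
    ∫⁻ x in Ioo (0:ℝ) 1 ×ˢ Ioo (-Real.pi) Real.pi,
      ENNReal.ofReal x.1 * g (Complex.polarCoord.symm x) := by
  rw [← lintegral_indicator measurableSet_ball, ← Complex.lintegral_comp_polarCoord_symm,
    ← lintegral_indicator (measurableSet_Ioo.prod measurableSet_Ioo),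
    ← lintegral_indicator polarCoord.open_target.measurableSet]
  refine lintegral_congr fun x => ?_
  rw [polarCoord_target]
  have hn : ‖Complex.polarCoord.symm x‖ = |x.1| := Complex.norm_polarCoord_symm x
  by_cases h1 : x ∈ Ioi (0:ℝ) ×ˢ Ioo (-Real.pi) Real.pi
  · have hx0 : 0 < x.1 := h1.1
    rw [indicator_of_mem h1]
    by_cases h2 : x.1 < 1
    · rw [indicator_of_mem (show Complex.polarCoord.symm x ∈ Metric.ball (0:ℂ) 1 by
          rw [mem_ball_zero_iff, hn, abs_of_pos hx0]; exact h2),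
        indicator_of_mem (show x ∈ Ioo (0:ℝ) 1 ×ˢ Ioo (-Real.pi) Real.pi from ⟨⟨hx0, h2⟩, h1.2⟩),
        smul_eq_mul]
    · rw [indicator_of_notMem (show Complex.polarCoord.symm x ∉ Metric.ball (0:ℂ) 1 by
          rw [mem_ball_zero_iff, hn, abs_of_pos hx0]; exact h2),
        indicator_of_notMem (fun h => h2 h.1.2), smul_zero]
  · rw [indicator_of_notMem h1, indicator_of_notMem]
    exact fun h => h1 ⟨h.1.1, h.2⟩

lemma polar_le (g : ℂ → ℝ≥0∞) : ∫⁻ z in Metric.ball (0:ℂ) 1, g z ≤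
    ∫⁻ θ in Ioo (-Real.pi) Real.pi, ∫⁻ r in Ioo (0:ℝ) 1,
      ENNReal.ofReal r * g (Complex.polarCoord.symm (r, θ)) := by
  rw [polar_set, Measure.volume_eq_prod, ← Measure.prod_restrict, ← lintegral_prod_swap]
  exact lintegral_prod_le _

lemma polar_eq (g : ℂ → ℝ≥0∞)
    (hg : AEMeasurable (fun x : ℝ × ℝ => ENNReal.ofReal x.1 * g (Complex.polarCoord.symm x))
      ((volume.restrict (Ioo (0:ℝ) 1)).prod (volume.restrict (Ioo (-Real.pi) Real.pi)))) :
    ∫⁻ z in Metric.ball (0:ℂ) 1, g z =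
    ∫⁻ θ in Ioo (-Real.pi) Real.pi, ∫⁻ r in Ioo (0:ℝ) 1,
      ENNReal.ofReal r * g (Complex.polarCoord.symm (r, θ)) := by
  rw [polar_set, Measure.volume_eq_prod, ← Measure.prod_restrict, lintegral_prod_symm _ hg]

lemma polar_radial {h : ℝ → ℝ≥0∞} (hh : AEMeasurable h (volume.restrict (Ioo (0:ℝ) 1))) :
    ∫⁻ z in Metric.ball (0:ℂ) 1, h ‖z‖ =
      ENNReal.ofReal (2 * Real.pi) * ∫⁻ r in Ioo (0:ℝ) 1, ENNReal.ofReal r * h r := by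
  have hn : ∀ r ∈ Ioo (0:ℝ) 1, ∀ θ : ℝ, ‖Complex.polarCoord.symm (r, θ)‖ = r := by
    intro r hr θ
    rw [Complex.norm_polarCoord_symm]
    exact abs_of_pos hr.1
  rw [polar_eq]
  · calc _ = ∫⁻ θ in Ioo (-Real.pi) Real.pi, ∫⁻ r in Ioo (0:ℝ) 1, ENNReal.ofReal r * h r := by
          refine lintegral_congr fun θ => ?_
          refine setLIntegral_congr_fun measurableSet_Ioo fun r hr => ?_
          simp only [hn r hr θ]
      _ = _ := by
          rw [lintegral_const, Measure.restrict_apply_univ, Real.volume_Ioo, mul_comm]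
          congr 2
          ring
  · have h1 : AEMeasurable (fun x : ℝ × ℝ => ENNReal.ofReal x.1 * h x.1)
        ((volume.restrict (Ioo (0:ℝ) 1)).prod (volume.restrict (Ioo (-Real.pi) Real.pi))) :=
      (ENNReal.measurable_ofReal.comp measurable_fst).aemeasurable.mul hh.comp_fst
    refine h1.congr ?_
    rw [Measure.prod_restrict]
    filter_upwards [ae_restrict_mem (measurableSet_Ioo.prod measurableSet_Ioo)] with x hx
    rw [show x = (x.1, x.2) from rfl, hn x.1 hx.1 x.2]

lemma polar_ray {r s θ : ℝ} (hr : 0 < r) :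
    ((s / ‖Complex.polarCoord.symm (r, θ)‖) • Complex.polarCoord.symm (r, θ) : ℂ) =
      Complex.polarCoord.symm (s, θ) := by
  rw [Complex.norm_polarCoord_symm, abs_of_pos hr]
  simp only [Complex.polarCoord_symm_apply, Complex.real_smul]
  push_cast
  have : (r:ℂ) ≠ 0 := by exact_mod_cast hr.ne'
  field_simp

lemma polarSymm_measurable : Measurable (Complex.polarCoord.symm : ℝ × ℝ → ℂ) := by
  have : (Complex.polarCoord.symm : ℝ × ℝ → ℂ) =
      fun x => (x.1 : ℂ) * (Real.cos x.2 + Real.sin x.2 * Complex.I) := by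
    funext x
    exact Complex.polarCoord_symm_apply x
  rw [this]
  fun_prop

/-! ### Comparisons -/

lemma LpE_le_mul {p : ℝ} (hp : 1 < p) (v : ℝ → ℝ) {g h : ℂ → ℝ≥0∞} {c : ℝ≥0∞} (hc : c ≠ ⊤)
    (hgh : ∀ z ∈ Metric.ball (0:ℂ) 1, g z ≤ c * h z) : LpE p v g ≤ c * LpE p v h := by
  have hp0 : 0 < p := by linarith
  have key : ∫⁻ z in Metric.ball (0:ℂ) 1, g z ^ p * ENNReal.ofReal (v ‖z‖) ≤
      c ^ p * ∫⁻ z in Metric.ball (0:ℂ) 1, h z ^ p * ENNReal.ofReal (v ‖z‖) := by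
    rw [← lintegral_const_mul' _ _ (ENNReal.rpow_ne_top_of_nonneg hp0.le hc)]
    refine setLIntegral_mono' measurableSet_ball fun z hz => ?_
    rw [← mul_assoc, ← ENNReal.mul_rpow_of_nonneg _ _ hp0.le]
    gcongr
    exact hgh z hz
  unfold LpE
  calc _ ≤ (c ^ p * (∫⁻ z in Metric.ball (0:ℂ) 1, h z ^ p * ENNReal.ofReal (v ‖z‖)) /
        ENNReal.ofReal Real.pi) ^ (1 / p) := by gcongr
    _ = _ := by
      rw [mul_div_assoc, ENNReal.mul_rpow_of_nonneg _ _ (by positivity), ← ENNReal.rpow_mul,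
        mul_one_div_cancel hp0.ne', ENNReal.rpow_one]

lemma hat1_anti {w : ℝ → ℝ} (hw : IsRadialWeight w) {r s : ℝ} (hr : 0 ≤ r) (hrs : r ≤ s) :
    ENNReal.ofReal (hat1 w s) ≤ ENNReal.ofReal (hat1 w r) := by
  rw [rw_hat1 hw hr, rw_hat1 hw (hr.trans hrs)]
  exact lintegral_mono_set (Ioo_subset_Ioo_left hrs)

lemma inv_le_two_inv {x y : ℝ≥0∞} (h : y ≤ x) : x⁻¹ ≤ 2 * (x + y)⁻¹ := by
  calc x⁻¹ = 2 * (2⁻¹ * x⁻¹) := by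
        rw [← mul_assoc, ENNReal.mul_inv_cancel (by simp) (by simp), one_mul]
    _ = 2 * (2 * x)⁻¹ := by rw [ENNReal.mul_inv (by simp) (by simp)]
    _ ≤ 2 * (x + y)⁻¹ := by
        gcongr
        rw [two_mul]
        gcongr

lemma HH_le_S {w : ℝ → ℝ} (hw : IsRadialWeight w) (f : ℂ → ℝ) {z : ℂ}
    (hz : z ∈ Metric.ball (0:ℂ) 1) : HE w f z + HstarE w f z ≤ 2 * SE w f z := by
  have hz1 : ‖z‖ < 1 := by simpa using hz
  have hz0 : 0 ≤ ‖z‖ := norm_nonneg z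
  have hsum : ∀ s ∈ Ico (0:ℝ) 1, ENNReal.ofReal (hat1 w s + hat1 w ‖z‖) =
      ENNReal.ofReal (hat1 w s) + ENNReal.ofReal (hat1 w ‖z‖) := fun s hs =>
    ENNReal.ofReal_add (rw_hat1_nonneg hw hs) (rw_hat1_nonneg hw ⟨hz0, hz1⟩)
  set D : ℝ → ℝ≥0∞ := fun s => ENNReal.ofReal (f ((s / ‖z‖) • z) * (s * w s)) with hD
  set K : ℝ → ℝ≥0∞ := fun s => D s / ENNReal.ofReal (hat1 w s + hat1 w ‖z‖) with hK
  have h1 : HE w f z ≤ ∫⁻ s in Ioo ‖z‖ 1, 2 * K s := by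
    have : HE w f z = ∫⁻ s in Ioo ‖z‖ 1, D s * (ENNReal.ofReal (hat1 w ‖z‖))⁻¹ := by
      rw [lintegral_mul_const', HE, div_eq_mul_inv]
      rw [ENNReal.inv_ne_top]
      simpa using rw_pos hw ⟨hz0, hz1⟩
    rw [this]
    refine setLIntegral_mono' measurableSet_Ioo fun s hs => ?_
    have hs' : s ∈ Ico (0:ℝ) 1 := ⟨hz0.trans hs.1.le, hs.2⟩
    change D s * (ENNReal.ofReal (hat1 w ‖z‖))⁻¹ ≤
      2 * (D s / ENNReal.ofReal (hat1 w s + hat1 w ‖z‖))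
    rw [hsum s hs', div_eq_mul_inv (D s), mul_left_comm 2,
      add_comm (ENNReal.ofReal (hat1 w s))]
    exact mul_le_mul' le_rfl (inv_le_two_inv (hat1_anti hw hz0 hs.1.le))
  have h2 : HstarE w f z ≤ ∫⁻ s in Ioo 0 ‖z‖, 2 * K s := by
    refine setLIntegral_mono' measurableSet_Ioo fun s hs => ?_
    have hs' : s ∈ Ico (0:ℝ) 1 := ⟨hs.1.le, hs.2.trans hz1⟩
    change D s / ENNReal.ofReal (hat1 w s) ≤
      2 * (D s / ENNReal.ofReal (hat1 w s + hat1 w ‖z‖))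
    rw [hsum s hs', div_eq_mul_inv (D s), div_eq_mul_inv (D s), mul_left_comm 2]
    exact mul_le_mul' le_rfl (inv_le_two_inv (hat1_anti hw hs.1.le hs.2.le))
  calc HE w f z + HstarE w f z
      ≤ (∫⁻ s in Ioo ‖z‖ 1, 2 * K s) + ∫⁻ s in Ioo 0 ‖z‖, 2 * K s := add_le_add h1 h2
    _ = ∫⁻ s in Ioo ‖z‖ 1 ∪ Ioo 0 ‖z‖, 2 * K s := by
        rw [lintegral_union measurableSet_Ioo]
        rw [Set.disjoint_left]
        intro x hx hx'
        exact lt_asymm hx.1 hx'.2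
    _ ≤ ∫⁻ s in Ioo 0 1, 2 * K s := by
        apply lintegral_mono_set
        rintro x (hx | hx)
        · exact ⟨hz0.trans_lt hx.1, hx.2⟩
        · exact ⟨hx.1, hx.2.trans hz1⟩
    _ = 2 * SE w f z := by
        rw [lintegral_const_mul' _ _ (by simp)]
        rfl

lemma M_le_HH {w : ℝ → ℝ} (hw : IsRadialWeight w) (f : ℂ → ℝ) {z : ℂ} :
    MradE w f z ≤ HE w (fun z => |f z|) z + HstarE w (fun z => |f z|) z := by
  refine iSup₂_le fun b hb => ?_
  set D : ℝ → ℝ≥0∞ := fun s => ENNReal.ofReal (|f ((s / ‖z‖) • z)| * (s * w s)) with hD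
  have hsplit : ∫⁻ s in Ioo b 1, D s ≤ (∫⁻ s in Ioo ‖z‖ 1, D s) + ∫⁻ s in Ioo b ‖z‖, D s := by
    calc ∫⁻ s in Ioo b 1, D s ≤ ∫⁻ s in Ioo ‖z‖ 1 ∪ Ioc b ‖z‖, D s := by
          apply lintegral_mono_set
          intro y hy
          rcases le_or_gt y ‖z‖ with h | h
          · exact Or.inr ⟨hy.1, h⟩
          · exact Or.inl ⟨h, hy.2⟩
      _ ≤ _ := lintegral_union_le _ _ _
      _ = _ := by
        congr 1
        exact setLIntegral_congr Ioo_ae_eq_Ioc.symm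
  calc (∫⁻ s in Ioo b 1, D s) / ENNReal.ofReal (hat1 w b)
      ≤ ((∫⁻ s in Ioo ‖z‖ 1, D s) + ∫⁻ s in Ioo b ‖z‖, D s) / ENNReal.ofReal (hat1 w b) := by gcongr
    _ = (∫⁻ s in Ioo ‖z‖ 1, D s) / ENNReal.ofReal (hat1 w b) +
        (∫⁻ s in Ioo b ‖z‖, D s) * (ENNReal.ofReal (hat1 w b))⁻¹ := by
        rw [ENNReal.add_div, div_eq_mul_inv (∫⁻ s in Ioo b ‖z‖, D s)]
    _ ≤ _ := by
        refine add_le_add ?_ ?_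
        · unfold HE
          exact ENNReal.div_le_div_left (hat1_anti hw hb.1 hb.2.le) _
        · calc (∫⁻ s in Ioo b ‖z‖, D s) * (ENNReal.ofReal (hat1 w b))⁻¹
              ≤ ∫⁻ s in Ioo b ‖z‖, D s * (ENNReal.ofReal (hat1 w b))⁻¹ :=
                lintegral_mul_const_le _ _
            _ ≤ ∫⁻ s in Ioo b ‖z‖, D s / ENNReal.ofReal (hat1 w s) := by
                refine setLIntegral_mono' measurableSet_Ioo fun s hs => ?_
                rw [div_eq_mul_inv]
                exact mul_le_mul' le_rfl (ENNReal.inv_le_inv.2 (hat1_anti hw hb.1 hs.1.le))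
            _ ≤ _ := lintegral_mono_set (Ioo_subset_Ioo_left hb.1)

lemma sufficiency {p : ℝ} (hp : 1 < p) {w v : ℝ → ℝ}
    (hw : IsRadialWeight w) (hv : IsRadialWeight v) (hAp : ApE p w v < ⊤) :
    ∃ C > (0:ℝ), ∀ f : ℂ → ℝ, Measurable f → (∀ z, 0 ≤ f z) → LpR p v f < ⊤ →
        LpE p v (SE w f) ≤ ENNReal.ofReal C * LpR p v f := by
  have hp0 : 0 < p := by linarith
  obtain ⟨C, hC, hmain⟩ := sufficiency_radial hp hw hv hAp
  have hCt : C ^ (1 / p) ≠ ⊤ := ENNReal.rpow_ne_top_of_nonneg (by positivity) hC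
  refine ⟨(C ^ (1 / p)).toReal + 1, by positivity, fun f hf hf0 _ => ?_⟩
  have hCle : C ^ (1 / p) ≤ ENNReal.ofReal ((C ^ (1 / p)).toReal + 1) := by
    rw [ENNReal.ofReal_add ENNReal.toReal_nonneg zero_le_one, ENNReal.ofReal_toReal hCt]
    exact le_self_add
  have hn : ∀ r ∈ Ioo (0:ℝ) 1, ∀ θ : ℝ, ‖Complex.polarCoord.symm (r, θ)‖ = r := by
    intro r hr θ
    rw [Complex.norm_polarCoord_symm]
    exact abs_of_pos hr.1
  have hform : ∀ r ∈ Ioo (0:ℝ) 1, ∀ x : ℝ, 0 ≤ x →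
      ENNReal.ofReal r * ENNReal.ofReal (x ^ p * v r) =
      ENNReal.ofReal x ^ p * ENNReal.ofReal (r * v r) := by
    intro r hr x hx
    rw [ENNReal.ofReal_mul (by positivity), ← ENNReal.ofReal_rpow_of_nonneg hx hp0.le,
      ENNReal.ofReal_mul hr.1.le]
    ring
  have key : ∫⁻ z in Metric.ball (0:ℂ) 1, SE w f z ^ p * ENNReal.ofReal (v ‖z‖) ≤
      C * ∫⁻ z in Metric.ball (0:ℂ) 1, ENNReal.ofReal (|f z| ^ p * v ‖z‖) := by
    have hR : ∫⁻ z in Metric.ball (0:ℂ) 1, ENNReal.ofReal (|f z| ^ p * v ‖z‖) =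
        ∫⁻ θ in Ioo (-Real.pi) Real.pi, ∫⁻ r in Ioo (0:ℝ) 1,
          ENNReal.ofReal (f (Complex.polarCoord.symm (r, θ))) ^ p * ENNReal.ofReal (r * v r) := by
      rw [polar_eq]
      · refine lintegral_congr fun θ => ?_
        refine setLIntegral_congr_fun measurableSet_Ioo fun r hr => ?_
        simp only [hn r hr θ, abs_of_nonneg (hf0 _)]
        exact hform r hr _ (hf0 _)
      · have h1 : AEMeasurable (fun x : ℝ × ℝ =>
            ENNReal.ofReal (f (Complex.polarCoord.symm x)) ^ p * ENNReal.ofReal (x.1 * v x.1))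
            ((volume.restrict (Ioo (0:ℝ) 1)).prod (volume.restrict (Ioo (-Real.pi) Real.pi))) := by
          refine AEMeasurable.mul ?_ ?_
          · exact ((ENNReal.measurable_ofReal.comp
              (hf.comp polarSymm_measurable)).pow_const p).aemeasurable
          · have h2 : AEMeasurable (fun r => ENNReal.ofReal (r * v r))
              (volume.restrict (Ioo (0:ℝ) 1)) :=
              (measurable_id.aemeasurable.mul (rw_aem hv)).ennreal_ofReal
            exact h2.comp_fst
        refine h1.congr ?_
        rw [Measure.prod_restrict]
        filter_upwards [ae_restrict_mem (measurableSet_Ioo.prod measurableSet_Ioo)] with x hx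
        have := hn x.1 hx.1 x.2
        rw [Prod.mk.eta] at this
        rw [this, abs_of_nonneg (hf0 _), hform x.1 hx.1 _ (hf0 _)]
    rw [hR, ← lintegral_const_mul' _ _ hC]
    refine (polar_le _).trans ?_
    refine lintegral_mono fun θ => ?_
    refine le_trans (le_of_eq ?_) (hmain
      (fun s => ENNReal.ofReal (f (Complex.polarCoord.symm (s, θ)))) ?_)
    · refine setLIntegral_congr_fun measurableSet_Ioo fun r hr => ?_
      simp only [hn r hr θ]
      rw [ENNReal.ofReal_mul hr.1.le, mul_left_comm]
      congr 2
      unfold SE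
      rw [hn r hr θ]
      refine setLIntegral_congr_fun measurableSet_Ioo fun s hs => ?_
      have := polar_ray (s := s) (θ := θ) hr.1
      rw [hn r hr θ] at this
      simp only [this]
      rw [ENNReal.ofReal_mul (hf0 _)]
    · exact ENNReal.measurable_ofReal.comp
        (hf.comp (polarSymm_measurable.comp (measurable_id.prodMk measurable_const)))
  unfold LpE LpR
  calc _ ≤ (C * (∫⁻ z in Metric.ball (0:ℂ) 1, ENNReal.ofReal (|f z| ^ p * v ‖z‖)) /
        ENNReal.ofReal Real.pi) ^ (1 / p) := by gcongr
    _ = C ^ (1 / p) * ((∫⁻ z in Metric.ball (0:ℂ) 1, ENNReal.ofReal (|f z| ^ p * v ‖z‖)) /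
        ENNReal.ofReal Real.pi) ^ (1 / p) := by
      rw [mul_div_assoc, ENNReal.mul_rpow_of_nonneg _ _ (by positivity)]
    _ ≤ _ := by gcongr

lemma nec_test {p : ℝ} (hp : 1 < p) {w v : ℝ → ℝ} (hv : IsRadialWeight v) {C : ℝ}
    (hC : ∀ f : ℂ → ℝ, Measurable f → LpR p v f < ⊤ →
        LpE p v (MradE w f) ≤ ENNReal.ofReal C * LpR p v f)
    {r : ℝ} (hr : r ∈ Ico (0:ℝ) 1) {G : ℝ → ℝ} (hG : Measurable G) (hG0 : ∀ s, 0 ≤ G s)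
    (hJ : ∫⁻ s in Ioo (0:ℝ) 1, ENNReal.ofReal s * ENNReal.ofReal (G s ^ p * v s) < ⊤) :
    ((∫⁻ s in Ioo r 1, ENNReal.ofReal (G s * (s * w s))) / ENNReal.ofReal (hat1 w r)) ^ p *
      ∫⁻ s in Ioo r 1, ENNReal.ofReal (s * v s) ≤ ENNReal.ofReal C ^ p *
      ∫⁻ s in Ioo (0:ℝ) 1, ENNReal.ofReal s * ENNReal.ofReal (G s ^ p * v s) := by
  have hp0 : 0 < p := by linarith
  set J := ∫⁻ s in Ioo (0:ℝ) 1, ENNReal.ofReal s * ENNReal.ofReal (G s ^ p * v s) with hJd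
  set c := (∫⁻ s in Ioo r 1, ENNReal.ofReal (G s * (s * w s))) / ENNReal.ofReal (hat1 w r) with hc
  set V := ∫⁻ s in Ioo r 1, ENNReal.ofReal (s * v s) with hV
  have hpi0 : ENNReal.ofReal Real.pi ≠ 0 := by simpa using Real.pi_pos
  have hcancel : ∀ x : ℝ≥0∞, ENNReal.ofReal (2 * Real.pi) * x / ENNReal.ofReal Real.pi = 2 * x := by
    intro x
    rw [ENNReal.ofReal_mul (by norm_num), div_eq_mul_inv]
    rw [show ENNReal.ofReal 2 * ENNReal.ofReal Real.pi * x * (ENNReal.ofReal Real.pi)⁻¹ =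
      ENNReal.ofReal 2 * x * (ENNReal.ofReal Real.pi * (ENNReal.ofReal Real.pi)⁻¹) by ring]
    rw [ENNReal.mul_inv_cancel hpi0 (by simp)]
    simp
  have hR : LpR p v (fun z => G ‖z‖) = (2 * J) ^ (1 / p) := by
    unfold LpR
    rw [← hcancel]
    have := polar_radial (h := fun s => ENNReal.ofReal (G s ^ p * v s))
      (((hG.pow_const p).aemeasurable.mul (rw_aem hv)).ennreal_ofReal)
    simp only [abs_of_nonneg (hG0 _)]
    rw [this]
  have hind : AEMeasurable ((Ioi r).indicator fun s => c ^ p * ENNReal.ofReal (v s))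
      (volume.restrict (Ioo (0:ℝ) 1)) :=
    ((rw_aem hv).ennreal_ofReal.const_mul _).indicator measurableSet_Ioi
  have hVeq : ∫⁻ s in Ioo (0:ℝ) 1, ENNReal.ofReal s *
      (Ioi r).indicator (fun s => c ^ p * ENNReal.ofReal (v s)) s = c ^ p * V := by
    have h1 : ∀ s, ENNReal.ofReal s * (Ioi r).indicator (fun s => c ^ p * ENNReal.ofReal (v s)) s =
        (Ioi r).indicator (fun s => c ^ p * (ENNReal.ofReal s * ENNReal.ofReal (v s))) s := by
      intro s
      by_cases hs : s ∈ Ioi r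
      · simp only [indicator_of_mem hs]; ring
      · simp only [indicator_of_notMem hs]; ring
    simp only [h1]
    rw [lintegral_indicator measurableSet_Ioi, Measure.restrict_restrict measurableSet_Ioi]
    have h2 : Ioi r ∩ Ioo 0 1 = Ioo r 1 := by
      ext x
      simp only [mem_inter_iff, mem_Ioi, mem_Ioo]
      constructor
      · rintro ⟨h1, h2, h3⟩; exact ⟨h1, h3⟩
      · rintro ⟨h1, h2⟩; exact ⟨h1, hr.1.trans_lt h1, h2⟩
    have hm : AEMeasurable (fun s => ENNReal.ofReal s * ENNReal.ofReal (v s))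
        (volume.restrict (Ioo r 1)) :=
      AEMeasurable.mono_measure
        (ENNReal.measurable_ofReal.aemeasurable.mul (rw_aem hv).ennreal_ofReal)
        (Measure.restrict_mono (Ioo_subset_Ioo_left hr.1) le_rfl)
    rw [h2, lintegral_const_mul'' _ hm]
    congr 1
    refine setLIntegral_congr_fun measurableSet_Ioo fun s hs => ?_
    rw [ENNReal.ofReal_mul (hr.1.trans hs.1.le)]
  have hM : (2 * (c ^ p * V)) ^ (1 / p) ≤ LpE p v (MradE w (fun z => G ‖z‖)) := by
    unfold LpE
    rw [← hcancel, ← hVeq, ← polar_radial hind]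
    refine ENNReal.rpow_le_rpow ?_ (by positivity)
    refine ENNReal.div_le_div_right ?_ _
    refine lintegral_mono fun z => ?_
    by_cases hz : ‖z‖ ∈ Ioi r
    · simp only [indicator_of_mem hz]
      refine mul_le_mul' (ENNReal.rpow_le_rpow ?_ hp0.le) le_rfl
      unfold MradE
      refine le_trans (le_of_eq ?_) (le_iSup₂ (f := fun b (_ : b ∈ Ico (0:ℝ) ‖z‖) =>
        (∫⁻ s in Set.Ioo b 1, ENNReal.ofReal (|(fun z : ℂ => G ‖z‖) ((s / ‖z‖) • z)| * (s * w s))) /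
          ENNReal.ofReal (hat1 w b)) r ⟨hr.1, hz⟩)
      rw [hc]
      congr 1
      refine setLIntegral_congr_fun measurableSet_Ioo fun s hs => ?_
      have hz' : 0 < ‖z‖ := hr.1.trans_lt hz
      have hs0 : 0 < s := hr.1.trans_lt hs.1
      have : ‖(s / ‖z‖) • z‖ = s := by
        rw [norm_smul, Real.norm_of_nonneg (by positivity)]
        field_simp
      simp only [this, abs_of_nonneg (hG0 _)]
    · simp only [indicator_of_notMem hz]
      exact zero_le
  have hfin : LpR p v (fun z => G ‖z‖) < ⊤ := by
    rw [hR]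
    exact ENNReal.rpow_lt_top_of_nonneg (by positivity)
      (ENNReal.mul_ne_top (by simp) hJ.ne)
  have h := hM.trans (hC (fun z => G ‖z‖) (hG.comp measurable_norm) hfin)
  rw [hR] at h
  have h3 := ENNReal.rpow_le_rpow h hp0.le
  rw [ENNReal.mul_rpow_of_nonneg _ _ hp0.le, ← ENNReal.rpow_mul, ← ENNReal.rpow_mul,
    one_div_mul_cancel hp0.ne', ENNReal.rpow_one, ENNReal.rpow_one,
    mul_left_comm (ENNReal.ofReal C ^ p) 2] at h3
  exact (ENNReal.mul_le_mul_iff_right (by simp) (by simp)).1 h3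

lemma sigma_form {p : ℝ} (hp : 1 < p) (x y : ℝ≥0∞) :
    (x / y ^ (1 / p)) ^ (p / (p - 1)) = x ^ (p / (p - 1)) * y ^ (-(1 / (p - 1))) := by
  have h1 : 0 < p - 1 := by linarith
  have hp0 : 0 < p := by linarith
  rw [ENNReal.div_rpow_of_nonneg _ _ (by positivity), ← ENNReal.rpow_mul, div_eq_mul_inv,
    ENNReal.rpow_neg]
  congr 3
  field_simp

lemma test_form {p : ℝ} (hp : 1 < p) {s x y e : ℝ} (hs : 0 ≤ s) (hx : 0 ≤ x) (hy : 0 ≤ y)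
    (he : 0 < e) :
    ENNReal.ofReal ((x / (y + e)) ^ (1 / (p - 1)) * (s * x)) =
      (ENNReal.ofReal s * ENNReal.ofReal x ^ (p / (p - 1))) *
        (ENNReal.ofReal y + ENNReal.ofReal e) ^ (-(1 / (p - 1))) := by
  have h1 : 0 < p - 1 := by linarith
  have h2 : p / (p - 1) = 1 / (p - 1) + 1 := by field_simp; ring
  rw [ENNReal.ofReal_mul (by positivity), ENNReal.ofReal_mul hs,
    ← ENNReal.ofReal_rpow_of_nonneg (by positivity) (by positivity),
    ENNReal.ofReal_div_of_pos (by positivity), ENNReal.div_rpow_of_nonneg _ _ (by positivity),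
    ENNReal.ofReal_add hy he.le, h2, ENNReal.rpow_add_of_nonneg _ _ (by positivity) zero_le_one,
    ENNReal.rpow_one, ENNReal.rpow_neg, div_eq_mul_inv]
  ring

lemma nec_cancel {p : ℝ} (hp : 1 < p) {I W V C : ℝ≥0∞} (hI : I ≠ ⊤)
    (h : (I / W) ^ p * V ≤ C ^ p * I) : V ^ (1 / p) * I ^ (1 - 1 / p) / W ≤ C := by
  have hp0 : 0 < p := by linarith
  have hp1 : 0 < 1 - 1 / p := by
    rw [sub_pos, div_lt_one hp0]; exact hp
  rcases eq_or_ne I 0 with h0 | h0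
  · rw [h0, ENNReal.zero_rpow_of_pos hp1]; simp
  have h3 := ENNReal.rpow_le_rpow h (z := 1 / p) (by positivity)
  rw [ENNReal.mul_rpow_of_nonneg _ _ (by positivity), ENNReal.mul_rpow_of_nonneg _ _ (by positivity),
    ← ENNReal.rpow_mul, ← ENNReal.rpow_mul, mul_one_div_cancel hp0.ne', ENNReal.rpow_one,
    ENNReal.rpow_one] at h3
  have hspl : I = I ^ (1 - 1 / p) * I ^ (1 / p) := by
    rw [← ENNReal.rpow_add _ _ h0 hI]; simp
  have h4 : I / W * V ^ (1 / p) = V ^ (1 / p) * I ^ (1 - 1 / p) / W * I ^ (1 / p) := by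
    conv_lhs => rw [hspl]
    simp only [div_eq_mul_inv]
    ring
  rw [h4] at h3
  refine (ENNReal.mul_le_mul_iff_left ?_ ?_).1 h3
  · exact (ennrpow_ne_zero_iff (by positivity)).2 h0
  · exact ENNReal.rpow_ne_top_of_nonneg (by positivity) hI

lemma necessity {p : ℝ} (hp : 1 < p) {w v : ℝ → ℝ}
    (hw : IsRadialWeight w) (hv : IsRadialWeight v) {C : ℝ}
    (hC : ∀ f : ℂ → ℝ, Measurable f → LpR p v f < ⊤ →
        LpE p v (MradE w f) ≤ ENNReal.ofReal C * LpR p v f) :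
    ApE p w v < ⊤ := by
  have hp0 : 0 < p := by linarith
  have hpm : 0 < p - 1 := by linarith
  have ha : 0 < 1 / (p - 1) := by positivity
  have hp1 : 0 < 1 - 1 / p := by
    rw [sub_pos, div_lt_one hp0]; exact hp
  refine lt_of_le_of_lt (iSup₂_le fun r hr => ?_) (ENNReal.ofReal_lt_top (r := C))
  obtain ⟨w', hw'm, hw'⟩ := rw_aem hw
  obtain ⟨v', hv'm, hv'⟩ := rw_aem hv
  set e : ℕ → ℝ := fun n => 1 / ((n:ℝ) + 1) with he
  have hepos : ∀ n, 0 < e n := fun n => by simp only [he]; positivity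
  set T : ℕ → Set ℝ := fun n => {s | r < s ∧ 0 ≤ w' s ∧ w' s ≤ n ∧ 0 ≤ v' s} with hT
  have hTm : ∀ n, MeasurableSet (T n) := fun n => by
    refine (measurableSet_lt measurable_const measurable_id).inter
      ((measurableSet_le measurable_const hw'm).inter
        ((measurableSet_le hw'm measurable_const).inter (measurableSet_le measurable_const hv'm)))
  set G : ℕ → ℝ → ℝ := fun n =>
    (T n).indicator fun s => (w' s / (v' s + e n)) ^ (1 / (p - 1)) with hGd
  have hGm : ∀ n, Measurable (G n) := fun n =>
    ((hw'm.div (hv'm.add measurable_const)).pow_const _).indicator (hTm n)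
  have hG0 : ∀ n s, 0 ≤ G n s := fun n s => by
    refine indicator_nonneg (fun x hx => ?_) s
    have h1 := hx.2.1
    have h2 := hx.2.2.2
    have h3 := hepos n
    positivity
  have hGb : ∀ n s, G n s ≤ ((n:ℝ) / e n) ^ (1 / (p - 1)) := fun n s => by
    have h3 := hepos n
    refine indicator_le' (g := fun _ => ((n:ℝ) / e n) ^ (1 / (p - 1))) (fun x hx => ?_)
      (fun x hx => ?_) s
    · have h1 := hx.2.1
      have h2 := hx.2.2.2
      have h4 := hx.2.2.1
      refine Real.rpow_le_rpow (by positivity) ?_ ha.le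
      exact div_le_div₀ (by positivity) h4 h3 (by linarith)
    · positivity
  -- pointwise comparison
  have hpt : ∀ n, ∀ s, 0 ≤ v' s → G n s ^ p * v' s ≤ G n s * w' s := fun n s hvs => by
    by_cases hs : s ∈ T n
    · have h1 := hs.2.1
      have h3 := hepos n
      have hGs : G n s = (w' s / (v' s + e n)) ^ (1 / (p - 1)) := indicator_of_mem hs _
      have hnn := hG0 n s
      have hpow : G n s ^ p = G n s * (w' s / (v' s + e n)) := by
        have h5 : p = 1 + (p - 1) := by ring
        have h6 : G n s ^ (p - 1) = w' s / (v' s + e n) := by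
          rw [hGs, ← Real.rpow_mul (by positivity), one_div_mul_cancel hpm.ne', Real.rpow_one]
        conv_lhs => rw [h5]
        rw [Real.rpow_add_of_nonneg hnn zero_le_one hpm.le, Real.rpow_one, h6]
      rw [hpow, mul_assoc]
      refine mul_le_mul_of_nonneg_left ?_ hnn
      rw [div_mul_eq_mul_div, div_le_iff₀ (by positivity)]
      nlinarith
    · have : G n s = 0 := indicator_of_notMem hs _
      rw [this, Real.zero_rpow hp0.ne']; simp
  set I : ℕ → ℝ≥0∞ := fun n => ∫⁻ s in Ioo r 1, ENNReal.ofReal (G n s * (s * w s)) with hI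
  have hItop : ∀ n, I n ≠ ⊤ := fun n => by
    refine ne_top_of_le_ne_top (b := ENNReal.ofReal (((n:ℝ) / e n) ^ (1 / (p - 1))) *
      ENNReal.ofReal (hat1 w r)) (ENNReal.mul_ne_top (by simp) (by simp)) ?_
    rw [rw_hat1 hw hr.1, ← lintegral_const_mul' _ _ (by simp)]
    refine lintegral_mono fun s => ?_
    rw [ENNReal.ofReal_mul (hG0 n s)]
    exact mul_le_mul' (ENNReal.ofReal_le_ofReal (hGb n s)) le_rfl
  have hJI : ∀ n, ∫⁻ s in Ioo (0:ℝ) 1, ENNReal.ofReal s * ENNReal.ofReal (G n s ^ p * v s) ≤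
      I n := fun n => by
    have h1 : I n = ∫⁻ s in Ioo (0:ℝ) 1, (Ioo r 1).indicator
        (fun s => ENNReal.ofReal (G n s * (s * w s))) s := by
      rw [lintegral_indicator measurableSet_Ioo, Measure.restrict_restrict measurableSet_Ioo,
        inter_eq_left.2 (Ioo_subset_Ioo_left hr.1)]
    rw [h1]
    refine lintegral_mono_ae ?_
    filter_upwards [ae_restrict_mem measurableSet_Ioo, hw', hv'] with s hs hws hvs
    by_cases hrs : s ∈ Ioo r 1
    · rw [indicator_of_mem hrs, ← ENNReal.ofReal_mul hs.1.le]
      refine ENNReal.ofReal_le_ofReal ?_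
      rw [hvs, hws]
      have h2 := hpt n s (hvs ▸ hv.1 s ⟨hs.1.le, hs.2⟩)
      nlinarith [hs.1]
    · have hsT : s ∉ T n := fun h => hrs ⟨h.1, hs.2⟩
      have : G n s = 0 := indicator_of_notMem hsT _
      rw [this, Real.zero_rpow hp0.ne']; simp
  have hb : ∀ n, (∫⁻ s in Ioo r 1, ENNReal.ofReal (s * v s)) ^ (1 / p) * I n ^ (1 - 1 / p) /
      ENNReal.ofReal (hat1 w r) ≤ ENNReal.ofReal C := fun n => by
    refine nec_cancel hp (hItop n) ?_
    refine (nec_test hp hv hC hr (hGm n) (hG0 n) ((hJI n).trans_lt (hItop n).lt_top)).trans ?_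
    exact mul_le_mul' le_rfl (hJI n)
  have hfatou : ∫⁻ s in Ioo r 1, ENNReal.ofReal s * sigmaE p w v s ≤ Filter.liminf I Filter.atTop := by
    refine le_trans ?_ (lintegral_liminf_le' (μ := volume.restrict (Ioo r 1))
      (f := fun n s => ENNReal.ofReal (G n s * (s * w s))) fun n => ?_)
    · refine lintegral_mono_ae ?_
      filter_upwards [ae_restrict_mem measurableSet_Ioo, ae_sub hw' hr.1 le_rfl,
        ae_sub hv' hr.1 le_rfl] with s hs hws hvs
      have hs0 : 0 ≤ s := hr.1.trans hs.1.le
      have hw0 := hw.1 s ⟨hs0, hs.2⟩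
      have hv0 := hv.1 s ⟨hs0, hs.2⟩
      refine le_of_eq (Filter.Tendsto.liminf_eq ?_).symm
      unfold sigmaE
      rw [sigma_form hp, ← mul_assoc]
      have hlim : Filter.Tendsto (fun n : ℕ => (ENNReal.ofReal s * ENNReal.ofReal (w s) ^ (p / (p - 1))) *
          (ENNReal.ofReal (v s) + ENNReal.ofReal (e n)) ^ (-(1 / (p - 1)))) Filter.atTop
          (nhds ((ENNReal.ofReal s * ENNReal.ofReal (w s) ^ (p / (p - 1))) *
            ENNReal.ofReal (v s) ^ (-(1 / (p - 1))))) := by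
        refine ENNReal.Tendsto.const_mul ?_ (Or.inr ?_)
        · refine ((ENNReal.continuous_rpow_const).tendsto _).comp ?_
          have h1 : Filter.Tendsto (fun n => ENNReal.ofReal (e n)) Filter.atTop (nhds 0) := by
            have := ENNReal.tendsto_ofReal (tendsto_one_div_add_atTop_nhds_zero_nat (𝕜 := ℝ))
            simpa [he] using this
          simpa using (tendsto_const_nhds (x := ENNReal.ofReal (v s))).add h1
        · refine ENNReal.mul_ne_top (by simp)
            (ENNReal.rpow_ne_top_of_nonneg (by positivity) (by simp))
      refine hlim.congr' ?_
      filter_upwards [Filter.eventually_ge_atTop (Nat.ceil (w s))] with n hn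
      have hsT : s ∈ T n := ⟨hs.1, hws ▸ hw0, hws ▸ (Nat.le_of_ceil_le hn), hvs ▸ hv0⟩
      have hGs : G n s = (w' s / (v' s + e n)) ^ (1 / (p - 1)) := indicator_of_mem hsT _
      rw [hGs, ← hws, ← hvs]
      exact (test_form hp hs0 hw0 hv0 (hepos n)).symm
    · refine ((hGm n).aemeasurable.mul ?_).ennreal_ofReal
      exact (rw_intble hw hr.1).aestronglyMeasurable.aemeasurable
  set V := ∫⁻ s in Ioo r 1, ENNReal.ofReal (s * v s) with hV
  have hVe : V = ENNReal.ofReal (hat1 v r) := (rw_hat1 hv hr.1).symm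
  have hV0 : V ^ (1 / p) ≠ 0 := by
    rw [ennrpow_ne_zero_iff (by positivity), hVe]
    simpa using rw_pos hv hr
  have hVt : V ^ (1 / p) ≠ ⊤ := by
    rw [hVe]
    exact ENNReal.rpow_ne_top_of_nonneg (by positivity) (by simp)
  have hW0 : ENNReal.ofReal (hat1 w r) ≠ 0 := by simpa using rw_pos hw hr
  have hWt : ENNReal.ofReal (hat1 w r) ≠ ⊤ := by simp
  have hequiv : ∀ x : ℝ≥0∞, V ^ (1 / p) * x ^ (1 - 1 / p) / ENNReal.ofReal (hat1 w r) ≤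
      ENNReal.ofReal C ↔ x ≤ (ENNReal.ofReal C * ENNReal.ofReal (hat1 w r) / V ^ (1 / p)) ^
        (1 / (1 - 1 / p)) := fun x => by
    rw [ENNReal.div_le_iff hW0 hWt, mul_comm (V ^ (1 / p)),
      ← ENNReal.le_div_iff_mul_le (Or.inl hV0) (Or.inl hVt), one_div (1 - 1 / p),
      ENNReal.le_rpow_inv_iff hp1]
  rw [hequiv]
  refine hfatou.trans ?_
  refine Filter.liminf_le_of_frequently_le' (Filter.Frequently.of_forall fun n => ?_)
  exact (hequiv _).1 (hb n)

/-- Theorem: Calderón operator. Let `1 < p < ∞` and let `ω` and `ν` be radial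
weights. Then the following are equivalent: (i) `H_ω + H*_ω` is bounded on `L^p_ν` (on
nonnegative functions); (ii) `S_{ω₁,rad}` is bounded on `L^p_ν` (on nonnegative functions);
(iii) `M_{ω₁,rad}` is bounded on `L^p_ν`; (iv) `A_p(ω,ν) < ∞`. -/
theorem calderon_tfae (p : ℝ) (hp : 1 < p) (w v : ℝ → ℝ)
    (hw : IsRadialWeight w) (hv : IsRadialWeight v) :
    ((∃ C > (0:ℝ), ∀ f : ℂ → ℝ, Measurable f → (∀ z, 0 ≤ f z) → LpR p v f < ⊤ →
        LpE p v (fun z => HE w f z + HstarE w f z) ≤ ENNReal.ofReal C * LpR p v f) ↔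
      ApE p w v < ⊤) ∧
    ((∃ C > (0:ℝ), ∀ f : ℂ → ℝ, Measurable f → (∀ z, 0 ≤ f z) → LpR p v f < ⊤ →
        LpE p v (SE w f) ≤ ENNReal.ofReal C * LpR p v f) ↔
      ApE p w v < ⊤) ∧
    ((∃ C > (0:ℝ), ∀ f : ℂ → ℝ, Measurable f → LpR p v f < ⊤ →
        LpE p v (MradE w f) ≤ ENNReal.ofReal C * LpR p v f) ↔
      ApE p w v < ⊤) := by
  have h42 := fun h : ApE p w v < ⊤ => sufficiency hp hw hv h
  have h21 : (∃ C > (0:ℝ), ∀ f : ℂ → ℝ, Measurable f → (∀ z, 0 ≤ f z) → LpR p v f < ⊤ →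
        LpE p v (SE w f) ≤ ENNReal.ofReal C * LpR p v f) →
      (∃ C > (0:ℝ), ∀ f : ℂ → ℝ, Measurable f → (∀ z, 0 ≤ f z) → LpR p v f < ⊤ →
        LpE p v (fun z => HE w f z + HstarE w f z) ≤ ENNReal.ofReal C * LpR p v f) := by
    rintro ⟨C, hC0, hC⟩
    refine ⟨2 * C, by positivity, fun f hf hf0 hfin => ?_⟩
    refine (LpE_le_mul hp v (c := 2) (h := SE w f) (by simp) fun z hz => HH_le_S hw f hz).trans ?_
    rw [ENNReal.ofReal_mul (by norm_num), mul_assoc]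
    simpa using mul_le_mul' le_rfl (hC f hf hf0 hfin)
  have h13 : (∃ C > (0:ℝ), ∀ f : ℂ → ℝ, Measurable f → (∀ z, 0 ≤ f z) → LpR p v f < ⊤ →
        LpE p v (fun z => HE w f z + HstarE w f z) ≤ ENNReal.ofReal C * LpR p v f) →
      (∃ C > (0:ℝ), ∀ f : ℂ → ℝ, Measurable f → LpR p v f < ⊤ →
        LpE p v (MradE w f) ≤ ENNReal.ofReal C * LpR p v f) := by
    rintro ⟨C, hC0, hC⟩
    refine ⟨C, hC0, fun f hf hfin => ?_⟩
    have habs : LpR p v (fun z => |f z|) = LpR p v f := by simp only [LpR, abs_abs]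
    have h1 := LpE_le_mul hp v (c := 1) (g := MradE w f)
      (h := fun z => HE w (fun z => |f z|) z + HstarE w (fun z => |f z|) z) (by simp)
      (fun z _ => by rw [one_mul]; exact M_le_HH hw f)
    rw [one_mul] at h1
    refine h1.trans ?_
    rw [← habs]
    exact hC (fun z => |f z|) (by simpa [Real.norm_eq_abs] using hf.norm) (fun z => abs_nonneg _)
      (habs ▸ hfin)
  have h34 : (∃ C > (0:ℝ), ∀ f : ℂ → ℝ, Measurable f → LpR p v f < ⊤ →
        LpE p v (MradE w f) ≤ ENNReal.ofReal C * LpR p v f) → ApE p w v < ⊤ := by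
    rintro ⟨C, _, hC⟩
    exact necessity hp hw hv hC
  exact ⟨⟨fun h => h34 (h13 h), fun h => h21 (h42 h)⟩,
    ⟨fun h => h34 (h13 (h21 h)), h42⟩, ⟨h34, fun h => h13 (h21 (h42 h))⟩⟩

end
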